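/- arXiv:2001.11952 — 2 statements merged into one kernel-verified Lean document; each statement's English description precedes it below -/
import Mathlib

section
/- Let L, d, τ > 0. Assume f : [0,∞)² → ℝ is continuously differentiable with ∂f/∂u < 0 and ∂f/∂v < 0 everywhere on [0,∞)², and H : [0,∞) → ℝ is continuously differentiable with H(0) = 0 and H′(u) > 0 for all u ≥ 0. Let (u_d, v_d) be a positive classical solution of the one-dimensional steady-state system (52). Then (u_d, v_d) is non-degenerate: the only pair (φ, ψ) of C² functions on [0, L] satisfying the linearized system (53) is (φ, ψ) = (0, 0). -/
open Set

/-! Suppose `φ` is positive somewhere and let `(α, β)` be a nodal interval of `φ`. If `ψ` were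
nonnegative at both ends, the maximum principle would give `ψ ≥ 0` on `(α, β)`, and comparing the
Wronskian of `φ` and `u_d` at the two ends would contradict `∂f/∂u, ∂f/∂v < 0`. So `ψ < 0` at one
end, say `α`; then `α` is interior, and `φ''(α)` has the sign of `ψ(α)`, whence `φ'(α) > 0`. Now
`φ` is negative just left of `α`, and the same argument on the nodal interval ending there forces
`ψ > 0` at its other end. Iterating, the zeros of `φ` and of `ψ` accumulate at a point where all
Cauchy data of the pair vanish, and uniqueness for linear systems makes the pair vanish, against
`ψ(α) < 0`. Hence `φ ≤ 0`, by symmetry `φ = 0`, and then `ψ = 0`. -/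

open Filter Topology

section Calculus

variable {E : Type*} [NormedAddCommGroup E] [NormedSpace ℝ E] {l r x : ℝ}

theorem hasDerivAt_derivWithin_Icc {y : ℝ → E} (hy : ContDiffOn ℝ 2 y (Icc l r))
    (hx : x ∈ Ioo l r) :
    HasDerivAt (derivWithin y (Icc l r)) (deriv (deriv y) x) x := by
  have heq : derivWithin y (Icc l r) =ᶠ[𝓝 x] deriv y := by
    filter_upwards [Ioo_mem_nhds hx.1 hx.2] with z hz
    exact derivWithin_of_mem_nhds (Icc_mem_nhds hz.1 hz.2)
  have hdiff : DifferentiableAt ℝ (derivWithin y (Icc l r)) x :=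
    ((hy.derivWithin (uniqueDiffOn_Icc (hx.1.trans hx.2)) le_rfl).differentiableOn one_ne_zero
      x (Ioo_subset_Icc_self hx)).differentiableAt (Icc_mem_nhds hx.1 hx.2)
  exact heq.deriv_eq ▸ hdiff.hasDerivAt

theorem hasDerivWithinAt_derivWithin_Icc_of_eqOn {y q : ℝ → E} (hlr : l < r)
    (hy : ContDiffOn ℝ 2 y (Icc l r)) (hq : ContinuousOn q (Icc l r))
    (h : EqOn (deriv (deriv y)) q (Ioo l r)) (hx : x ∈ Icc l r) :
    HasDerivWithinAt (derivWithin y (Icc l r)) (q x) (Icc l r) x := by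
  have hI : UniqueDiffOn ℝ (Icc l r) := uniqueDiffOn_Icc hlr
  have hy' : ContDiffOn ℝ 1 (derivWithin y (Icc l r)) (Icc l r) := hy.derivWithin hI le_rfl
  have heq : EqOn (derivWithin (derivWithin y (Icc l r)) (Icc l r)) q (Icc l r) := by
    refine EqOn.of_subset_closure (fun z hz => ?_) (hy'.continuousOn_derivWithin hI le_rfl) hq
      Ioo_subset_Icc_self (closure_Ioo hlr.ne).ge
    rw [derivWithin_of_mem_nhds (Icc_mem_nhds hz.1 hz.2),
      (hasDerivAt_derivWithin_Icc hy hz).deriv, h hz]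
  exact heq hx ▸ (hy'.differentiableOn one_ne_zero x hx).hasDerivWithinAt

theorem nonneg_of_deriv_deriv_neg_of_neg {y : ℝ → ℝ} (hy : ContinuousOn y (Icc l r))
    (hl : 0 ≤ y l) (hr : 0 ≤ y r) (h : ∀ x ∈ Ioo l r, y x < 0 → deriv (deriv y) x < 0) :
    ∀ x ∈ Icc l r, 0 ≤ y x := by
  intro x hx
  obtain ⟨m, hm, hmin⟩ := isCompact_Icc.exists_isMinOn ⟨x, hx⟩ hy
  by_contra! hneg
  have hym : y m < 0 := (hmin hx).trans_lt hneg
  have hm : m ∈ Ioo l r :=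
    ⟨hm.1.lt_of_ne (by rintro rfl; exact hl.not_gt hym),
      hm.2.lt_of_ne (by rintro rfl; exact hr.not_gt hym)⟩
  have hnhds : Icc l r ∈ 𝓝 m := Icc_mem_nhds hm.1 hm.2
  have hlmin : IsLocalMin y m := hmin.isLocalMin hnhds
  have hlmax : IsLocalMax y m :=
    isLocalMax_of_deriv_deriv_neg (h m hm hym) hlmin.deriv_eq_zero (hy.continuousAt hnhds)
  have hconst : y =ᶠ[𝓝 m] fun _ => y m := by
    filter_upwards [hlmin, hlmax] with z h₁ h₂ using le_antisymm h₂ h₁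
  have hzero : deriv (deriv y) m = 0 := by
    simpa using hconst.deriv.deriv_eq
  exact (h m hm hym).ne hzero

theorem eq_zero_and_derivWithin_eq_zero_of_frequently {y : ℝ → E}
    (hy : DifferentiableOn ℝ y (Icc l r)) (hx : x ∈ Ico l r) (h : ∃ᶠ z in 𝓝[>] x, y z = 0) :
    y x = 0 ∧ derivWithin y (Icc l r) x = 0 := by
  have hd := (hy x (Ico_subset_Icc_self hx)).hasDerivWithinAt
  have hle : 𝓝[>] x ≤ 𝓝[Icc l r \ {x}] x := by
    rw [← nhdsWithin_Ioo_eq_nhdsGT hx.2]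
    exact nhdsWithin_mono x fun z hz => ⟨⟨hx.1.trans hz.1.le, hz.2.le⟩, hz.1.ne'⟩
  constructor
  · by_contra hne
    exact h ((hd.continuousWithinAt.eventually_ne hne).filter_mono
      (hle.trans (nhdsWithin_mono x sdiff_subset)))
  · by_contra hne
    exact h ((hd.eventually_ne hne).filter_mono hle)

theorem frequently_nhdsGT_sInf {X : Type*} [ConditionallyCompleteLinearOrder X] [NoMaxOrder X]
    [TopologicalSpace X] [OrderTopology X] {s : Set X} {P : X → Prop} (hs : s.Nonempty)
    (h : ∀ x ∈ s, ∃ z ∈ Ioo (sInf s) x, P z) : ∃ᶠ z in 𝓝[>] (sInf s), P z := by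
  refine (nhdsGT_basis _).frequently_iff.2 fun e he => ?_
  obtain ⟨x, hx, hxe⟩ := exists_lt_of_csInf_lt hs he
  obtain ⟨z, hz, hPz⟩ := h x hx
  exact ⟨z, ⟨hz.1, hz.2.trans hxe⟩, hPz⟩

theorem eq_zero_of_norm_deriv_deriv_le {z z' z'' : ℝ → E} {K : ℝ}
    (hz : ∀ x ∈ Icc l r, HasDerivWithinAt z (z' x) (Icc l r) x)
    (hz' : ∀ x ∈ Icc l r, HasDerivWithinAt z' (z'' x) (Icc l r) x)
    (bound : ∀ x ∈ Icc l r, ‖z'' x‖ ≤ K * ‖z x‖) (hl : z l = 0) (hl' : z' l = 0) :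
    ∀ x ∈ Icc l r, z x = 0 := by
  have hd : ∀ x ∈ Icc l r,
      HasDerivWithinAt (fun t => (z t, z' t)) (z' x, z'' x) (Icc l r) x :=
    fun x hx => (hz x hx).prodMk (hz' x hx)
  have hzero : ∀ x ∈ Icc l r, (z x, z' x) = 0 := by
    refine eq_zero_of_abs_deriv_le_mul_abs_self_of_eq_zero_right (K := max 1 K)
      (fun x hx => (hd x hx).continuousWithinAt)
      (fun x hx => (hd x (Ico_subset_Icc_self hx)).mono_of_mem_nhdsWithin
        (Icc_mem_nhdsGE_of_mem hx)) (by simp [hl, hl']) fun x hx => ?_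
    refine norm_prod_le_iff.2 ⟨?_, (bound x (Ico_subset_Icc_self hx)).trans ?_⟩
    · calc ‖z' x‖ ≤ ‖(z x, z' x)‖ := norm_snd_le (z x, z' x)
        _ ≤ max 1 K * ‖(z x, z' x)‖ := le_mul_of_one_le_left (norm_nonneg _) (le_max_left 1 K)
    · gcongr
      · exact le_max_right 1 K
      · exact norm_fst_le (z x, z' x)
  exact fun x hx => congrArg Prod.fst (hzero x hx)

theorem abs_mul_add_mul_le {c e s t K : ℝ} (h : |c| + |e| ≤ K) :
    |c * s + e * t| ≤ K * ‖(s, t)‖ :=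
  calc |c * s + e * t| ≤ |c| * |s| + |e| * |t| := by
        simpa only [abs_mul] using abs_add_le (c * s) (e * t)
    _ ≤ |c| * ‖(s, t)‖ + |e| * ‖(s, t)‖ := by
        gcongr
        exacts [norm_fst_le (s, t), norm_snd_le (s, t)]
    _ = (|c| + |e|) * ‖(s, t)‖ := by ring
    _ ≤ K * ‖(s, t)‖ := by gcongr

end Calculus

/-- `(α, β)` is a positive nodal interval of `y`: a maximal open interval on which `y > 0`, with `y`
vanishing at both ends. Negative nodal intervals of `y` are those of `-y`. -/
structure IsNodalInterval (y : ℝ → ℝ) (α β : ℝ) : Prop where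
  lt : α < β
  left : y α = 0
  right : y β = 0
  pos : ∀ x ∈ Ioo α β, 0 < y x

theorem exists_isNodalInterval {y : ℝ → ℝ} {l r x : ℝ} (hy : ContinuousOn y (Icc l r))
    (hl : y l = 0) (hr : y r = 0) (hx : x ∈ Icc l r) (hyx : 0 < y x) :
    ∃ α β, l ≤ α ∧ β ≤ r ∧ x ∈ Ioo α β ∧ IsNodalInterval y α β := by
  have hcompact : ∀ {a b}, Icc a b ⊆ Icc l r → IsCompact (Icc a b ∩ y ⁻¹' {0}) := fun hab =>
    isCompact_Icc.of_isClosed_subset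
      ((hy.mono hab).preimage_isClosed_of_isClosed isClosed_Icc isClosed_singleton)
      inter_subset_left
  obtain ⟨α, ⟨hα, hα0⟩, hαmax⟩ := (hcompact (Icc_subset_Icc_right hx.2)).exists_isGreatest
    ⟨l, left_mem_Icc.2 hx.1, hl⟩
  obtain ⟨β, ⟨hβ, hβ0⟩, hβmin⟩ := (hcompact (Icc_subset_Icc_left hx.1)).exists_isLeast
    ⟨r, right_mem_Icc.2 hx.2, hr⟩
  have hαx : α < x := hα.2.lt_of_ne (by rintro rfl; exact hyx.ne' hα0)
  have hxβ : x < β := hβ.1.lt_of_ne (by rintro rfl; exact hyx.ne' hβ0)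
  refine ⟨α, β, hα.1, hβ.2, ⟨hαx, hxβ⟩, hαx.trans hxβ, hα0, hβ0, fun t ht => ?_⟩
  by_contra! hyt
  have hsub : uIcc t x ⊆ Ioo α β := ordConnected_Ioo.uIcc_subset ht ⟨hαx, hxβ⟩
  obtain ⟨s, hs, hs0⟩ := intermediate_value_uIcc
    (hy.mono (hsub.trans fun z hz => ⟨hα.1.trans hz.1.le, hz.2.le.trans hβ.2⟩))
    (Icc_subset_uIcc ⟨hyt, hyx.le⟩)
  obtain ⟨hαs, hsβ⟩ := hsub hs
  rcases le_total s x with h | h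
  · exact hαs.not_ge (hαmax ⟨⟨hα.1.trans hαs.le, h⟩, hs0⟩)
  · exact hsβ.not_ge (hβmin ⟨⟨h, hsβ.le.trans hβ.2⟩, hs0⟩)

namespace IsNodalInterval

variable {y w : ℝ → ℝ} {α β : ℝ}

theorem comp_neg (h : IsNodalInterval y α β) : IsNodalInterval (fun x => y (-x)) (-β) (-α) where
  lt := neg_lt_neg h.lt
  left := by simpa using h.right
  right := by simpa using h.left
  pos x hx := h.pos (-x) ⟨lt_neg.2 hx.2, neg_lt.2 hx.1⟩

theorem nonneg (h : IsNodalInterval y α β) {x : ℝ} (hx : x ∈ Icc α β) : 0 ≤ y x := by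
  rcases eq_endpoints_or_mem_Ioo_of_mem_Icc hx with rfl | rfl | hx
  exacts [h.left.ge, h.right.ge, (h.pos x hx).le]

theorem derivWithin_left_nonneg (h : IsNodalInterval y α β) :
    0 ≤ derivWithin y (Icc α β) α := by
  have hmin : IsMinOn y (Icc α β) α := fun x hx => h.left.le.trans (h.nonneg hx)
  have hone : (1 : ℝ) ∈ posTangentConeAt (Icc α β) α :=
    one_mem_posTangentConeAt_iff_frequently.2
      (Filter.Eventually.frequently (mem_of_superset (Ioo_mem_nhdsGT h.lt) Ioo_subset_Icc_self))
  exact hmin.localize.fderivWithin_nonneg hone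

theorem derivWithin_right_nonpos (h : IsNodalInterval y α β) :
    derivWithin y (Icc α β) β ≤ 0 := by
  simpa [derivWithin_comp_neg] using h.comp_neg.derivWithin_left_nonneg

theorem deriv_left_pos (h : IsNodalInterval y α β) (hy : ContinuousAt y α)
    (hα : deriv (deriv y) α < 0) : 0 < deriv y α := by
  have hpos : ∀ᶠ x in 𝓝[>] α, 0 < y x := by
    filter_upwards [Ioo_mem_nhdsGT h.lt] with x hx using h.pos x hx
  have not_nonpos : ¬ ∀ᶠ x in 𝓝[>] α, y x ≤ 0 := fun hnonpos =>
    let ⟨_, hlt, hle⟩ := (hpos.and hnonpos).exists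
    hlt.not_ge hle
  by_contra! hle
  rcases hle.lt_or_eq with hlt | heq
  · refine not_nonpos ?_
    filter_upwards [nhdsWithin_le_nhds (eventually_nhdsWithin_sign_eq_of_deriv_neg hlt h.left),
      self_mem_nhdsWithin] with x hsign hx
    rw [sign_neg (sub_neg.2 hx), sign_eq_neg_one_iff] at hsign
    exact hsign.le
  · refine not_nonpos (nhdsWithin_le_nhds ?_)
    filter_upwards [isLocalMax_of_deriv_deriv_neg hα heq hy] with x hx using hx.trans_eq h.left

theorem exists_deriv_deriv_mul_le (h : IsNodalInterval y α β)
    (hy : ContDiffOn ℝ 2 y (Icc α β)) (hw : ContDiffOn ℝ 2 w (Icc α β))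
    (hwα : 0 ≤ w α) (hwβ : 0 ≤ w β) :
    ∃ x ∈ Ioo α β, deriv (deriv y) x * w x ≤ y x * deriv (deriv w) x := by
  set I := Icc α β
  set W : ℝ → ℝ := fun x => derivWithin y I x * w x - y x * derivWithin w I x
  have hI : UniqueDiffOn ℝ I := uniqueDiffOn_Icc h.lt
  have hW : ContinuousOn W I :=
    ((hy.continuousOn_derivWithin hI one_le_two).mul hw.continuousOn).sub
      (hy.continuousOn.mul (hw.continuousOn_derivWithin hI one_le_two))
  have hderiv : ∀ {g : ℝ → ℝ}, ContDiffOn ℝ 2 g I → ∀ x ∈ Ioo α β,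
      HasDerivAt g (derivWithin g I x) x := fun hg x hx =>
    (hg.differentiableOn two_ne_zero x (Ioo_subset_Icc_self hx)).hasDerivWithinAt.hasDerivAt
      (Icc_mem_nhds hx.1 hx.2)
  have hW' : ∀ x ∈ Ioo α β,
      HasDerivAt W (deriv (deriv y) x * w x - y x * deriv (deriv w) x) x := fun x hx => by
    have := ((hasDerivAt_derivWithin_Icc hy hx).mul (hderiv hw x hx)).sub
      ((hderiv hy x hx).mul (hasDerivAt_derivWithin_Icc hw hx))
    exact this.congr_deriv (by ring)
  have hWα : 0 ≤ W α := by
    simpa [W, h.left] using mul_nonneg h.derivWithin_left_nonneg hwα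
  have hWβ : W β ≤ 0 := by
    simpa [W, h.right] using mul_nonpos_of_nonpos_of_nonneg h.derivWithin_right_nonpos hwβ
  obtain ⟨x, hx, hslope⟩ := exists_hasDerivAt_eq_slope W _ h.lt hW hW'
  refine ⟨x, hx, sub_nonpos.1 (hslope.trans_le ?_)⟩
  exact div_nonpos_of_nonpos_of_nonneg (by linarith) (sub_pos.2 h.lt).le

end IsNodalInterval

/-- The linear system `φ'' = p φ + a ψ`, `ψ'' = k ψ - b φ` on `[l, r]` with zero Dirichlet data, in
which `ψ` is driven by `φ` and feeds back negatively on it, together with a positive strict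
supersolution `u` of `y'' = p y`. The coefficients carry the signs that the linearization at a
positive steady state produces. -/
structure NegativeFeedback (l r : ℝ) (p a k b u φ ψ : ℝ → ℝ) : Prop where
  p_cont : ContinuousOn p (Icc l r)
  a_cont : ContinuousOn a (Icc l r)
  k_cont : ContinuousOn k (Icc l r)
  b_cont : ContinuousOn b (Icc l r)
  a_pos : ∀ x ∈ Ioo l r, 0 < a x
  k_pos : ∀ x ∈ Ioo l r, 0 < k x
  b_nonneg : ∀ x ∈ Ioo l r, 0 ≤ b x
  u_smooth : ContDiffOn ℝ 2 u (Icc l r)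
  φ_smooth : ContDiffOn ℝ 2 φ (Icc l r)
  ψ_smooth : ContDiffOn ℝ 2 ψ (Icc l r)
  u_pos : ∀ x ∈ Ioo l r, 0 < u x
  u_super : ∀ x ∈ Ioo l r, deriv (deriv u) x < p x * u x
  φ_eq : ∀ x ∈ Ioo l r, deriv (deriv φ) x = p x * φ x + a x * ψ x
  ψ_eq : ∀ x ∈ Ioo l r, deriv (deriv ψ) x = k x * ψ x - b x * φ x
  φ_left : φ l = 0
  φ_right : φ r = 0
  ψ_left : ψ l = 0
  ψ_right : ψ r = 0

/-- At `x` the function `φ` vanishes with a slope of sign opposite to that of `ψ`. In a solution of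
the Dirichlet problem such a zero would reproduce itself indefinitely to its left, so none can
exist. -/
def IsOpposedZero (φ ψ : ℝ → ℝ) (x : ℝ) : Prop :=
  φ x = 0 ∧ deriv φ x * ψ x < 0

theorem isOpposedZero_neg_iff {φ ψ : ℝ → ℝ} {x : ℝ} :
    IsOpposedZero (-φ) (-ψ) x ↔ IsOpposedZero φ ψ x := by
  simp [IsOpposedZero, deriv.neg]

namespace NegativeFeedback

variable {l r : ℝ} {p a k b u φ ψ : ℝ → ℝ}

theorem neg (S : NegativeFeedback l r p a k b u φ ψ) :
    NegativeFeedback l r p a k b u (-φ) (-ψ) where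
  __ := S
  φ_smooth := S.φ_smooth.neg
  ψ_smooth := S.ψ_smooth.neg
  φ_eq x hx := by
    simp only [deriv.neg', deriv.fun_neg, Pi.neg_apply, S.φ_eq x hx]
    ring
  ψ_eq x hx := by
    simp only [deriv.neg', deriv.fun_neg, Pi.neg_apply, S.ψ_eq x hx]
    ring
  φ_left := neg_eq_zero.2 S.φ_left
  φ_right := neg_eq_zero.2 S.φ_right
  ψ_left := neg_eq_zero.2 S.ψ_left
  ψ_right := neg_eq_zero.2 S.ψ_right

theorem comp_neg (S : NegativeFeedback l r p a k b u φ ψ) :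
    NegativeFeedback (-r) (-l) (fun x => p (-x)) (fun x => a (-x)) (fun x => k (-x))
      (fun x => b (-x)) (fun x => u (-x)) (fun x => φ (-x)) (fun x => ψ (-x)) := by
  have hIcc : MapsTo Neg.neg (Icc (-r) (-l)) (Icc l r) := fun x hx =>
    ⟨le_neg.2 hx.2, neg_le.2 hx.1⟩
  have hIoo : MapsTo Neg.neg (Ioo (-r) (-l)) (Ioo l r) := fun x hx =>
    ⟨lt_neg.2 hx.2, neg_lt.2 hx.1⟩
  have hcont : ∀ {g : ℝ → ℝ}, ContinuousOn g (Icc l r) →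
      ContinuousOn (fun x => g (-x)) (Icc (-r) (-l)) := fun hg => hg.comp continuousOn_neg hIcc
  have hsmooth : ∀ {g : ℝ → ℝ}, ContDiffOn ℝ 2 g (Icc l r) →
      ContDiffOn ℝ 2 (fun x => g (-x)) (Icc (-r) (-l)) := fun hg =>
    hg.comp contDiff_neg.contDiffOn hIcc
  have hderiv : ∀ (g : ℝ → ℝ) (x : ℝ),
      deriv (deriv fun x => g (-x)) x = deriv (deriv g) (-x) := fun g x => by
    rw [show (deriv fun x => g (-x)) = fun x => -deriv g (-x) from funext (deriv_comp_neg g)]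
    simp [deriv_comp_neg]
  exact
    { p_cont := hcont S.p_cont
      a_cont := hcont S.a_cont
      k_cont := hcont S.k_cont
      b_cont := hcont S.b_cont
      a_pos := fun x hx => S.a_pos _ (hIoo hx)
      k_pos := fun x hx => S.k_pos _ (hIoo hx)
      b_nonneg := fun x hx => S.b_nonneg _ (hIoo hx)
      u_smooth := hsmooth S.u_smooth
      φ_smooth := hsmooth S.φ_smooth
      ψ_smooth := hsmooth S.ψ_smooth
      u_pos := fun x hx => S.u_pos _ (hIoo hx)
      u_super := fun x hx => (hderiv u x).trans_lt (S.u_super _ (hIoo hx))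
      φ_eq := fun x hx => (hderiv φ x).trans (S.φ_eq _ (hIoo hx))
      ψ_eq := fun x hx => (hderiv ψ x).trans (S.ψ_eq _ (hIoo hx))
      φ_left := by simpa using S.φ_right
      φ_right := by simpa using S.φ_left
      ψ_left := by simpa using S.ψ_right
      ψ_right := by simpa using S.ψ_left }

theorem u_nonneg (S : NegativeFeedback l r p a k b u φ ψ) (hlr : l < r) {x : ℝ}
    (hx : x ∈ Icc l r) : 0 ≤ u x :=
  le_on_closure (fun z hz => (S.u_pos z hz).le) continuousOn_const
    (S.u_smooth.continuousOn.mono (closure_Ioo hlr.ne).le) ((closure_Ioo hlr.ne).ge hx)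

theorem ψ_nonneg_of_φ_nonneg (S : NegativeFeedback l r p a k b u φ ψ) {α β : ℝ} (hα : l ≤ α)
    (hβ : β ≤ r) (hψα : 0 ≤ ψ α) (hψβ : 0 ≤ ψ β) (hφ : ∀ x ∈ Ioo α β, 0 ≤ φ x) :
    ∀ x ∈ Icc α β, 0 ≤ ψ x := by
  refine nonneg_of_deriv_deriv_neg_of_neg
    (S.ψ_smooth.continuousOn.mono (Icc_subset_Icc hα hβ)) hψα hψβ fun x hx hψx => ?_
  have hx' : x ∈ Ioo l r := Ioo_subset_Ioo hα hβ hx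
  rw [S.ψ_eq x hx', sub_neg]
  exact (mul_neg_of_pos_of_neg (S.k_pos x hx') hψx).trans_le
    (mul_nonneg (S.b_nonneg x hx') (hφ x hx))

theorem ψ_left_neg_or_right_neg (S : NegativeFeedback l r p a k b u φ ψ) {α β : ℝ} (hα : l ≤ α)
    (hβ : β ≤ r) (h : IsNodalInterval φ α β) : ψ α < 0 ∨ ψ β < 0 := by
  by_contra! hψ
  have hsub : Icc α β ⊆ Icc l r := Icc_subset_Icc hα hβ
  have hlr : l < r := (hα.trans_lt h.lt).trans_le hβ
  have hψ_nonneg := S.ψ_nonneg_of_φ_nonneg hα hβ hψ.1 hψ.2 fun x hx => (h.pos x hx).le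
  obtain ⟨x, hx, hW⟩ := h.exists_deriv_deriv_mul_le (S.φ_smooth.mono hsub) (S.u_smooth.mono hsub)
    (S.u_nonneg hlr (hsub (left_mem_Icc.2 h.lt.le)))
    (S.u_nonneg hlr (hsub (right_mem_Icc.2 h.lt.le)))
  have hx' : x ∈ Ioo l r := Ioo_subset_Ioo hα hβ hx
  refine hW.not_gt ?_
  calc φ x * deriv (deriv u) x
      < φ x * (p x * u x) := mul_lt_mul_of_pos_left (S.u_super x hx') (h.pos x hx)
    _ = p x * φ x * u x := by ring
    _ ≤ (p x * φ x + a x * ψ x) * u x := by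
      refine mul_le_mul_of_nonneg_right (le_add_of_nonneg_right ?_) (S.u_pos x hx').le
      exact mul_nonneg (S.a_pos x hx').le (hψ_nonneg x (Ioo_subset_Icc_self hx))
    _ = deriv (deriv φ) x * u x := by rw [S.φ_eq x hx']

theorem isOpposedZero_of_left_end (S : NegativeFeedback l r p a k b u φ ψ) {α β : ℝ} (hα : l ≤ α)
    (hβ : β ≤ r) (h : IsNodalInterval φ α β) (hψ : ψ α < 0) :
    α ∈ Ioo l r ∧ IsOpposedZero φ ψ α := by
  have hαI : α ∈ Ioo l r :=
    ⟨hα.lt_of_ne (by rintro rfl; exact hψ.ne S.ψ_left), h.lt.trans_le hβ⟩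
  have hφ'' : deriv (deriv φ) α < 0 := by
    rw [S.φ_eq α hαI, h.left, mul_zero, zero_add]
    exact mul_neg_of_pos_of_neg (S.a_pos α hαI) hψ
  have hφ' : 0 < deriv φ α := h.deriv_left_pos
    (S.φ_smooth.continuousOn.continuousAt (Icc_mem_nhds hαI.1 hαI.2)) hφ''
  exact ⟨hαI, h.left, mul_neg_of_pos_of_neg hφ' hψ⟩

theorem exists_isNodalInterval_neg (S : NegativeFeedback l r p a k b u φ ψ) {β : ℝ}
    (hβ : β ∈ Ioo l r) (hφ : φ β = 0) (hφ' : 0 < deriv φ β) :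
    ∃ α, l ≤ α ∧ IsNodalInterval (-φ) α β := by
  obtain ⟨e, he, hneg⟩ : ∃ e < β, ∀ x ∈ Ioo e β, φ x < 0 := by
    refine mem_nhdsLT_iff_exists_Ioo_subset.1 ?_
    filter_upwards [nhdsWithin_le_nhds (eventually_nhdsWithin_sign_eq_of_deriv_pos hφ' hφ),
      self_mem_nhdsWithin] with x hsign hx
    rwa [sign_neg (sub_neg.2 hx), sign_eq_neg_one_iff] at hsign
  obtain ⟨x, hx, hxβ⟩ := exists_between (max_lt hβ.1 he)
  rw [max_lt_iff] at hx
  obtain ⟨α, γ, hα, hγ, hxI, hnodal⟩ := exists_isNodalInterval (y := -φ)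
    (S.φ_smooth.continuousOn.neg.mono (Icc_subset_Icc_right hβ.2.le)) S.neg.φ_left
    (neg_eq_zero.2 hφ) ⟨hx.1.le, hxβ.le⟩ (neg_pos.2 (hneg x ⟨hx.2, hxβ⟩))
  obtain rfl : γ = β := hγ.eq_of_not_lt fun hlt =>
    (hneg γ ⟨hx.2.trans hxI.2, hlt⟩).ne (neg_eq_zero.1 hnodal.right)
  exact ⟨α, hα, hnodal⟩

theorem exists_isOpposedZero_lt (S : NegativeFeedback l r p a k b u φ ψ) {β : ℝ}
    (hβ : β ∈ Ioo l r) (h : IsOpposedZero φ ψ β) :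
    ∃ α ∈ Ioo l β, IsOpposedZero φ ψ α ∧ ∃ z ∈ Ioo α β, ψ z = 0 := by
  wlog hψβ : ψ β < 0 generalizing φ ψ
  · have hψβ' : (-ψ) β < 0 :=
      neg_lt_zero.2 ((not_lt.1 hψβ).lt_of_ne' (right_ne_zero_of_mul h.2.ne))
    simpa [isOpposedZero_neg_iff] using this S.neg (isOpposedZero_neg_iff.2 h) hψβ'
  have hφ' : 0 < deriv φ β := pos_of_mul_neg_left h.2 hψβ.le
  obtain ⟨α, hα, hnodal⟩ := S.exists_isNodalInterval_neg hβ h.1 hφ'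
  have hψα : (-ψ) α < 0 := (S.neg.ψ_left_neg_or_right_neg hα hβ.2.le hnodal).resolve_right
    (neg_pos.2 hψβ).le.not_gt
  obtain ⟨hαI, hopp⟩ := S.neg.isOpposedZero_of_left_end hα hβ.2.le hnodal hψα
  obtain ⟨z, hz, hψz⟩ := intermediate_value_Ioo' hnodal.lt.le
    (S.ψ_smooth.continuousOn.mono (Icc_subset_Icc hα hβ.2.le)) ⟨hψβ, neg_lt_zero.1 hψα⟩
  exact ⟨α, ⟨hαI.1, hnodal.lt⟩, isOpposedZero_neg_iff.1 hopp, z, hz, hψz⟩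

theorem eq_zero_of_initial (S : NegativeFeedback l r p a k b u φ ψ) {s : ℝ} (hs : s ∈ Ico l r)
    (hφ : φ s = 0) (hφ' : derivWithin φ (Icc l r) s = 0) (hψ : ψ s = 0)
    (hψ' : derivWithin ψ (Icc l r) s = 0) : ∀ x ∈ Icc s r, φ x = 0 ∧ ψ x = 0 := by
  have hlr : l < r := hs.1.trans_lt hs.2
  have hsub : Icc s r ⊆ Icc l r := Icc_subset_Icc_left hs.1
  have hcφ := S.φ_smooth.continuousOn
  have hcψ := S.ψ_smooth.continuousOn
  obtain ⟨K, hK⟩ := isCompact_Icc.exists_bound_of_continuousOn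
    (((S.p_cont.abs.add S.a_cont.abs).add S.k_cont.abs).add S.b_cont.abs)
  have hz : ∀ x ∈ Icc s r, HasDerivWithinAt (fun t => (φ t, ψ t))
      (derivWithin φ (Icc l r) x, derivWithin ψ (Icc l r) x) (Icc s r) x := fun x hx =>
    ((S.φ_smooth.differentiableOn two_ne_zero x (hsub hx)).hasDerivWithinAt.prodMk
      (S.ψ_smooth.differentiableOn two_ne_zero x (hsub hx)).hasDerivWithinAt).mono hsub
  have hz' : ∀ x ∈ Icc s r, HasDerivWithinAt
      (fun t => (derivWithin φ (Icc l r) t, derivWithin ψ (Icc l r) t))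
      (p x * φ x + a x * ψ x, k x * ψ x - b x * φ x) (Icc s r) x := fun x hx =>
    ((hasDerivWithinAt_derivWithin_Icc_of_eqOn hlr S.φ_smooth
        ((S.p_cont.mul hcφ).add (S.a_cont.mul hcψ)) S.φ_eq (hsub hx)).prodMk
      (hasDerivWithinAt_derivWithin_Icc_of_eqOn hlr S.ψ_smooth
        ((S.k_cont.mul hcψ).sub (S.b_cont.mul hcφ)) S.ψ_eq (hsub hx))).mono hsub
  have bound : ∀ x ∈ Icc s r,
      ‖(p x * φ x + a x * ψ x, k x * ψ x - b x * φ x)‖ ≤ K * ‖(φ x, ψ x)‖ := fun x hx => by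
    have hKx : |p x| + |a x| + |k x| + |b x| ≤ K := (le_abs_self _).trans (hK x (hsub hx))
    refine norm_prod_le_iff.2 ⟨abs_mul_add_mul_le ?_, ?_⟩
    · linarith [abs_nonneg (k x), abs_nonneg (b x)]
    · rw [sub_eq_neg_add, ← neg_mul]
      refine abs_mul_add_mul_le ?_
      linarith [abs_nonneg (p x), abs_nonneg (a x), abs_neg (b x)]
  exact fun x hx => Prod.mk_eq_zero.1
    (eq_zero_of_norm_deriv_deriv_le hz hz' bound (by simp [hφ, hψ]) (by simp [hφ', hψ']) x hx)

theorem not_isOpposedZero (S : NegativeFeedback l r p a k b u φ ψ) {β : ℝ} (hβ : β ∈ Ioo l r) :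
    ¬ IsOpposedZero φ ψ β := by
  intro h
  set G : Set ℝ := {x ∈ Ioo l r | IsOpposedZero φ ψ x}
  have hG : G.Nonempty := ⟨β, hβ, h⟩
  have hGbdd : BddBelow G := ⟨l, fun x hx => hx.1.1.le⟩
  have hstep : ∀ x ∈ G, ∃ y ∈ G, y < x ∧ ∃ z ∈ Ioo y x, ψ z = 0 := fun x hx => by
    obtain ⟨y, hy, hopp, z, hz, hψz⟩ := S.exists_isOpposedZero_lt hx.1 hx.2
    exact ⟨y, ⟨⟨hy.1, hy.2.trans hx.1.2⟩, hopp⟩, hy.2, z, hz, hψz⟩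
  have hlt : ∀ x ∈ G, sInf G < x := fun x hx =>
    let ⟨_, hyG, hyx, _⟩ := hstep x hx
    (csInf_le hGbdd hyG).trans_lt hyx
  have hs : sInf G ∈ Ico l r :=
    ⟨le_csInf hG fun x hx => hx.1.1.le, (hlt β ⟨hβ, h⟩).trans hβ.2⟩
  have hφfreq : ∃ᶠ z in 𝓝[>] (sInf G), φ z = 0 := frequently_nhdsGT_sInf hG fun x hx =>
    let ⟨y, hyG, hyx, _⟩ := hstep x hx
    ⟨y, ⟨hlt y hyG, hyx⟩, hyG.2.1⟩
  have hψfreq : ∃ᶠ z in 𝓝[>] (sInf G), ψ z = 0 := frequently_nhdsGT_sInf hG fun x hx =>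
    let ⟨y, hyG, _, z, hz, hψz⟩ := hstep x hx
    ⟨z, ⟨(hlt y hyG).trans hz.1, hz.2⟩, hψz⟩
  obtain ⟨hφ, hφ'⟩ := eq_zero_and_derivWithin_eq_zero_of_frequently
    (S.φ_smooth.differentiableOn two_ne_zero) hs hφfreq
  obtain ⟨hψ, hψ'⟩ := eq_zero_and_derivWithin_eq_zero_of_frequently
    (S.ψ_smooth.differentiableOn two_ne_zero) hs hψfreq
  have hψβ : ψ β = 0 :=
    (S.eq_zero_of_initial hs hφ hφ' hψ hψ' β ⟨(hlt β ⟨hβ, h⟩).le, hβ.2.le⟩).2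
  exact right_ne_zero_of_mul h.2.ne hψβ

theorem φ_nonpos (S : NegativeFeedback l r p a k b u φ ψ) : ∀ x ∈ Icc l r, φ x ≤ 0 := by
  by_contra! ⟨x, hx, hφx⟩
  obtain ⟨α, β, hα, hβ, -, hnodal⟩ :=
    exists_isNodalInterval S.φ_smooth.continuousOn S.φ_left S.φ_right hx hφx
  rcases S.ψ_left_neg_or_right_neg hα hβ hnodal with hψ | hψ
  · obtain ⟨hαI, hopp⟩ := S.isOpposedZero_of_left_end hα hβ hnodal hψ
    exact S.not_isOpposedZero hαI hopp
  · obtain ⟨hβI, hopp⟩ := S.comp_neg.isOpposedZero_of_left_end (neg_le_neg hβ) (neg_le_neg hα)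
      hnodal.comp_neg (by simpa using hψ)
    exact S.comp_neg.not_isOpposedZero hβI hopp

theorem eq_zero (S : NegativeFeedback l r p a k b u φ ψ) :
    ∀ x ∈ Icc l r, φ x = 0 ∧ ψ x = 0 := by
  have hφ : ∀ x ∈ Icc l r, φ x = 0 := fun x hx =>
    le_antisymm (S.φ_nonpos x hx) (neg_nonpos.1 (S.neg.φ_nonpos x hx))
  refine fun x hx => ⟨hφ x hx, le_antisymm ?_ ?_⟩
  · exact neg_nonneg.1 (S.neg.ψ_nonneg_of_φ_nonneg le_rfl le_rfl S.neg.ψ_left.ge S.neg.ψ_right.ge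
      (fun z hz => neg_nonneg.2 (hφ z (Ioo_subset_Icc_self hz)).le) x hx)
  · exact S.ψ_nonneg_of_φ_nonneg le_rfl le_rfl S.ψ_left.ge S.ψ_right.ge
      (fun z hz => (hφ z (Ioo_subset_Icc_self hz)).ge) x hx

end NegativeFeedback

theorem continuous_deriv_of_contDiff_uncurry {E : Type*} [NormedAddCommGroup E] [NormedSpace ℝ E]
    {g : E → ℝ → ℝ} {t : E → ℝ} (hg : ContDiff ℝ 1 (Function.uncurry g)) (ht : Continuous t) :
    Continuous fun z => deriv (g z) (t z) :=
  (Continuous.fderiv hg ht le_rfl).clm_apply continuous_const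

theorem negativeFeedback_of_linearization {l r d τ : ℝ} (hd : 0 < d) (hτ : 0 < τ)
    {F Fu Fv h u φ ψ : ℝ → ℝ}
    (hF : ContinuousOn F (Icc l r)) (hFu : ContinuousOn Fu (Icc l r))
    (hFv : ContinuousOn Fv (Icc l r)) (hh : ContinuousOn h (Icc l r))
    (hFu_neg : ∀ x ∈ Ioo l r, Fu x < 0) (hFv_neg : ∀ x ∈ Ioo l r, Fv x < 0)
    (hh_nonneg : ∀ x ∈ Ioo l r, 0 ≤ h x)
    (hu : ContDiffOn ℝ 2 u (Icc l r)) (hφ : ContDiffOn ℝ 2 φ (Icc l r))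
    (hψ : ContDiffOn ℝ 2 ψ (Icc l r)) (hu_pos : ∀ x ∈ Ioo l r, 0 < u x)
    (hu_eq : ∀ x ∈ Ioo l r, -(d * deriv (deriv u) x) = u x * F x)
    (hφ_eq : ∀ x ∈ Ioo l r,
      -(d * deriv (deriv φ) x) - (u x * Fu x + F x) * φ x = u x * Fv x * ψ x)
    (hψ_eq : ∀ x ∈ Ioo l r,
      -(d * deriv (deriv ψ) x) + (1 / τ) * ψ x = (1 / τ) * h x * φ x)
    (hφb : φ l = 0 ∧ φ r = 0) (hψb : ψ l = 0 ∧ ψ r = 0) :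
    NegativeFeedback l r (fun x => -(u x * Fu x + F x) / d) (fun x => -(u x * Fv x) / d)
      (fun _ => 1 / (τ * d)) (fun x => h x / (τ * d)) u φ ψ where
  p_cont := ((hu.continuousOn.mul hFu).add hF).neg.div_const d
  a_cont := (hu.continuousOn.mul hFv).neg.div_const d
  k_cont := continuousOn_const
  b_cont := hh.div_const (τ * d)
  a_pos x hx := div_pos (neg_pos.2 (mul_neg_of_pos_of_neg (hu_pos x hx) (hFv_neg x hx))) hd
  k_pos _ _ := one_div_pos.2 (mul_pos hτ hd)
  b_nonneg x hx := div_nonneg (hh_nonneg x hx) (mul_pos hτ hd).le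
  u_smooth := hu
  φ_smooth := hφ
  ψ_smooth := hψ
  u_pos := hu_pos
  u_super x hx := by
    have hslope : u x ^ 2 * Fu x < 0 :=
      mul_neg_of_pos_of_neg (pow_pos (hu_pos x hx) 2) (hFu_neg x hx)
    rw [div_mul_eq_mul_div, lt_div_iff₀ hd]
    linarith [hu_eq x hx]
  φ_eq x hx := by
    field_simp
    linarith [hφ_eq x hx]
  ψ_eq x hx := by
    have hx_eq := hψ_eq x hx
    field_simp at hx_eq ⊢
    linarith
  φ_left := hφb.1
  φ_right := hφb.2
  ψ_left := hψb.1
  ψ_right := hψb.2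

theorem stmt12_general {L d τ : ℝ} (hd : 0 < d) (hτ : 0 < τ) {f : ℝ → ℝ → ℝ} {H : ℝ → ℝ}
    (hf : ContDiff ℝ 1 (Function.uncurry f))
    (hfu : ∀ p ≥ (0 : ℝ), ∀ q ≥ (0 : ℝ), deriv (fun s => f s q) p < 0)
    (hfv : ∀ p ≥ (0 : ℝ), ∀ q ≥ (0 : ℝ), deriv (f p) q < 0)
    (hH : ContDiff ℝ 1 H) (hH' : ∀ p ≥ (0 : ℝ), 0 ≤ deriv H p) {ud vd : ℝ → ℝ}
    (hu2 : ContDiffOn ℝ 2 ud (Icc 0 L)) (hv : ContinuousOn vd (Icc 0 L))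
    (hup : ∀ x ∈ Ioo 0 L, 0 < ud x) (hvn : ∀ x ∈ Ioo 0 L, 0 ≤ vd x)
    (heq1 : ∀ x ∈ Ioo 0 L, -(d * deriv (deriv ud) x) = ud x * f (ud x) (vd x))
    {φ ψ : ℝ → ℝ} (hφ2 : ContDiffOn ℝ 2 φ (Icc 0 L)) (hψ2 : ContDiffOn ℝ 2 ψ (Icc 0 L))
    (hlin1 : ∀ x ∈ Ioo 0 L,
      -(d * deriv (deriv φ) x)
        - (ud x * deriv (fun s => f s (vd x)) (ud x) + f (ud x) (vd x)) * φ x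
      = ud x * deriv (f (ud x)) (vd x) * ψ x)
    (hlin2 : ∀ x ∈ Ioo 0 L,
      -(d * deriv (deriv ψ) x) + (1 / τ) * ψ x = (1 / τ) * deriv H (ud x) * φ x)
    (hφb : φ 0 = 0 ∧ φ L = 0) (hψb : ψ 0 = 0 ∧ ψ L = 0) :
    ∀ x ∈ Icc 0 L, φ x = 0 ∧ ψ x = 0 := by
  have hu : ContinuousOn ud (Icc 0 L) := hu2.continuousOn
  have huv : ContinuousOn (fun x => (ud x, vd x)) (Icc 0 L) := hu.prodMk hv
  have hfu_cont : Continuous fun z : ℝ × ℝ => deriv (fun s => f s z.2) z.1 :=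
    continuous_deriv_of_contDiff_uncurry
      (hf.comp (contDiff_snd.prodMk (contDiff_snd.comp contDiff_fst))) continuous_fst
  have hfv_cont : Continuous fun z : ℝ × ℝ => deriv (f z.1) z.2 :=
    continuous_deriv_of_contDiff_uncurry
      (hf.comp ((contDiff_fst.comp contDiff_fst).prodMk contDiff_snd)) continuous_snd
  exact (negativeFeedback_of_linearization hd hτ (hf.continuous.comp_continuousOn huv)
    (hfu_cont.comp_continuousOn huv) (hfv_cont.comp_continuousOn huv)
    ((hH.continuous_deriv le_rfl).comp_continuousOn hu)
    (fun x hx => hfu _ (hup x hx).le _ (hvn x hx)) (fun x hx => hfv _ (hup x hx).le _ (hvn x hx))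
    (fun x hx => hH' _ (hup x hx).le) hu2 hφ2 hψ2 hup heq1 hlin1 hlin2 hφb hψb).eq_zero

/-- non-degeneracy of positive solutions of the 1D steady state system (52).
If f is C¹ with f_u < 0 and f_v < 0 on [0,∞)², H is C¹ with H(0) = 0 and H' > 0 on [0,∞),
and (u_d, v_d) is a positive classical solution of (52), then the only C² solution
(φ, ψ) of the linearized system (53) is (0, 0). -/
theorem stmt12 (L d τ : ℝ) (hL : 0 < L) (hd : 0 < d) (hτ : 0 < τ)
    (f : ℝ → ℝ → ℝ) (H : ℝ → ℝ)
    (hf : ContDiff ℝ 1 (Function.uncurry f))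
    (hfu : ∀ p ≥ (0:ℝ), ∀ q ≥ (0:ℝ), deriv (fun s => f s q) p < 0)
    (hfv : ∀ p ≥ (0:ℝ), ∀ q ≥ (0:ℝ), deriv (f p) q < 0)
    (hH : ContDiff ℝ 1 H) (hH0 : H 0 = 0)
    (hH' : ∀ p ≥ (0:ℝ), 0 < deriv H p)
    -- (u_d, v_d) positive classical solution of (52)
    (ud vd : ℝ → ℝ)
    (hu2 : ContDiffOn ℝ 2 ud (Icc 0 L)) (hv2 : ContDiffOn ℝ 2 vd (Icc 0 L))
    (hup : ∀ x ∈ Ioo 0 L, 0 < ud x) (hvp : ∀ x ∈ Ioo 0 L, 0 < vd x)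
    (heq1 : ∀ x ∈ Ioo 0 L, -(d * deriv (deriv ud) x) = ud x * f (ud x) (vd x))
    (heq2 : ∀ x ∈ Ioo 0 L, -(d * deriv (deriv vd) x) = (1 / τ) * (H (ud x) - vd x))
    (hub : ud 0 = 0 ∧ ud L = 0) (hvb : vd 0 = 0 ∧ vd L = 0)
    -- (φ, ψ) a C² solution of the linearized system (53)
    (φ ψ : ℝ → ℝ)
    (hφ2 : ContDiffOn ℝ 2 φ (Icc 0 L)) (hψ2 : ContDiffOn ℝ 2 ψ (Icc 0 L))
    (hlin1 : ∀ x ∈ Ioo 0 L,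
      -(d * deriv (deriv φ) x)
        - (ud x * deriv (fun s => f s (vd x)) (ud x) + f (ud x) (vd x)) * φ x
      = ud x * deriv (f (ud x)) (vd x) * ψ x)
    (hlin2 : ∀ x ∈ Ioo 0 L,
      -(d * deriv (deriv ψ) x) + (1 / τ) * ψ x = (1 / τ) * deriv H (ud x) * φ x)
    (hφb : φ 0 = 0 ∧ φ L = 0) (hψb : ψ 0 = 0 ∧ ψ L = 0) :
    ∀ x ∈ Icc 0 L, φ x = 0 ∧ ψ x = 0 := by
  exact stmt12_general hd hτ hf hfu hfv hH (fun p hp => (hH' p hp).le) hu2 hv2.continuousOn hup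
    (fun x hx => (hvp x hx).le) heq1 hφ2 hψ2 hlin1 hlin2 hφb hψb
end

section
/- Let L, τ > 0. Assume f : [0,∞)² → ℝ is twice continuously differentiable with ∂f/∂u < 0 and ∂f/∂v < 0 everywhere on [0,∞)² and f(0,0) > 0; H : [0,∞) → ℝ is twice continuously differentiable with H(0) = 0 and H′(u) > 0 for all u ≥ 0; and condition (A4) holds for F(u, v) = u f(u, v). Set d* = f(0,0)·L²/π². Then for every d with 0 < d < d*, the one-dimensional steady-state system (52) has exactly one positive classical solution (u_d, v_d), and this solution is non-degenerate; for d ≥ d*, (52) has no positive classical solution. -/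
open Set Real

/-- A positive classical solution of the 1D steady state system (52). -/
def IsPosSol (L d τ : ℝ) (f : ℝ → ℝ → ℝ) (H : ℝ → ℝ) (u v : ℝ → ℝ) : Prop :=
  ContDiffOn ℝ 2 u (Icc 0 L) ∧ ContDiffOn ℝ 2 v (Icc 0 L) ∧
  (∀ x ∈ Ioo 0 L, 0 < u x) ∧ (∀ x ∈ Ioo 0 L, 0 < v x) ∧
  (∀ x ∈ Ioo 0 L, -(d * deriv (deriv u) x) = u x * f (u x) (v x)) ∧
  (∀ x ∈ Ioo 0 L, -(d * deriv (deriv v) x) = (1 / τ) * (H (u x) - v x)) ∧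
  u 0 = 0 ∧ u L = 0 ∧ v 0 = 0 ∧ v L = 0

/-- Non-degeneracy of a solution (u, v) of (52): the only C² solution (φ, ψ) of the
linearized system (53) is (0, 0). -/
def NonDeg (L d τ : ℝ) (f : ℝ → ℝ → ℝ) (H : ℝ → ℝ) (u v : ℝ → ℝ) : Prop :=
  ∀ φ ψ : ℝ → ℝ,
    ContDiffOn ℝ 2 φ (Icc 0 L) → ContDiffOn ℝ 2 ψ (Icc 0 L) →
    (∀ x ∈ Ioo 0 L,
      -(d * deriv (deriv φ) x)
        - (u x * deriv (fun s => f s (v x)) (u x) + f (u x) (v x)) * φ x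
      = u x * deriv (f (u x)) (v x) * ψ x) →
    (∀ x ∈ Ioo 0 L,
      -(d * deriv (deriv ψ) x) + (1 / τ) * ψ x = (1 / τ) * deriv H (u x) * φ x) →
    φ 0 = 0 → φ L = 0 → ψ 0 = 0 → ψ L = 0 →
    ∀ x ∈ Icc 0 L, φ x = 0 ∧ ψ x = 0

open Filter Topology

/-
Let `(φ, ψ)` be the difference of two positive solutions, or a solution of the linearization at a
positive solution `(u, v)`. In both cases `u` is a strict supersolution for the equation of `φ`
wherever `φ` and `ψ` do not have opposite signs. By Sturm comparison `ψ` is therefore negative at an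
endpoint of every interval on which `φ` is positive between two zeros. From there the interval is
followed, on the same side, by one on which both signs are reversed, and the next sign change of `φ`
is of the same kind. These sign changes accumulate at a point where `φ`, `φ'`, `ψ` and `ψ'` all
vanish, so `φ = ψ = 0`: positive solutions are unique and non-degenerate.

Existence follows by continuation from a system solved by `(sin (π x / L), sin (π x / L))`. The set
of solvable parameters is open by the implicit function theorem, since the Green operator is compact
and solutions are non-degenerate. It is closed because solutions are bounded and the growth rate of
a positive solution is somewhere at most the principal eigenvalue `(π / L) ^ 2`, which it exceeds
everywhere at zero density. Conversely the growth rate of a positive solution is somewhere at least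
`(π / L) ^ 2`, which forces `f 0 0 / d > (π / L) ^ 2`.
-/

/-- `φ` and `φ'` are continuous on `[a, b]`, and inside the interval `φ'` is the derivative of `φ`
and `φ''` that of `φ'`. The second derivative is data and need not be continuous. -/
structure TwiceDiffOn {E : Type*} [NormedAddCommGroup E] [NormedSpace ℝ E] (a b : ℝ)
    (φ φ' φ'' : ℝ → E) : Prop where
  continuousOn : ContinuousOn φ (Icc a b)
  continuousOn_deriv : ContinuousOn φ' (Icc a b)
  hasDerivAt : ∀ x ∈ Ioo a b, HasDerivAt φ (φ' x) x
  hasDerivAt_deriv : ∀ x ∈ Ioo a b, HasDerivAt φ' (φ'' x) x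

namespace TwiceDiffOn

section NormedSpace

variable {E F : Type*} [NormedAddCommGroup E] [NormedSpace ℝ E] [NormedAddCommGroup F]
  [NormedSpace ℝ F] {a b : ℝ} {φ φ' φ'' χ χ' χ'' : ℝ → E} {ψ ψ' ψ'' : ℝ → F}

theorem mono (h : TwiceDiffOn a b φ φ' φ'') {c d : ℝ} (hc : a ≤ c) (hd : d ≤ b) :
    TwiceDiffOn c d φ φ' φ'' :=
  ⟨h.continuousOn.mono (Icc_subset_Icc hc hd), h.continuousOn_deriv.mono (Icc_subset_Icc hc hd),
    fun x hx => h.hasDerivAt x (Ioo_subset_Ioo hc hd hx),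
    fun x hx => h.hasDerivAt_deriv x (Ioo_subset_Ioo hc hd hx)⟩

theorem congr_deriv₂ (h : TwiceDiffOn a b φ φ' φ'') (heq : EqOn φ'' χ (Ioo a b)) :
    TwiceDiffOn a b φ φ' χ :=
  ⟨h.continuousOn, h.continuousOn_deriv, h.hasDerivAt,
    fun x hx => heq hx ▸ h.hasDerivAt_deriv x hx⟩

theorem neg (h : TwiceDiffOn a b φ φ' φ'') :
    TwiceDiffOn a b (fun x => -φ x) (fun x => -φ' x) (fun x => -φ'' x) :=
  ⟨h.continuousOn.neg, h.continuousOn_deriv.neg, fun x hx => (h.hasDerivAt x hx).neg,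
    fun x hx => (h.hasDerivAt_deriv x hx).neg⟩

theorem sub (h : TwiceDiffOn a b φ φ' φ'') (h' : TwiceDiffOn a b χ χ' χ'') :
    TwiceDiffOn a b (fun x => φ x - χ x) (fun x => φ' x - χ' x) (fun x => φ'' x - χ'' x) :=
  ⟨h.continuousOn.sub h'.continuousOn, h.continuousOn_deriv.sub h'.continuousOn_deriv,
    fun x hx => (h.hasDerivAt x hx).sub (h'.hasDerivAt x hx),
    fun x hx => (h.hasDerivAt_deriv x hx).sub (h'.hasDerivAt_deriv x hx)⟩

theorem prodMk (h : TwiceDiffOn a b φ φ' φ'') (h' : TwiceDiffOn a b ψ ψ' ψ'') :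
    TwiceDiffOn a b (fun x => (φ x, ψ x)) (fun x => (φ' x, ψ' x)) (fun x => (φ'' x, ψ'' x)) :=
  ⟨h.continuousOn.prodMk h'.continuousOn, h.continuousOn_deriv.prodMk h'.continuousOn_deriv,
    fun x hx => (h.hasDerivAt x hx).prodMk (h'.hasDerivAt x hx),
    fun x hx => (h.hasDerivAt_deriv x hx).prodMk (h'.hasDerivAt_deriv x hx)⟩

theorem clm_comp (h : TwiceDiffOn a b φ φ' φ'') (T : E →L[ℝ] F) :
    TwiceDiffOn a b (fun x => T (φ x)) (fun x => T (φ' x)) (fun x => T (φ'' x)) :=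
  ⟨T.continuous.comp_continuousOn h.continuousOn,
    T.continuous.comp_continuousOn h.continuousOn_deriv,
    fun x hx => T.hasFDerivAt.comp_hasDerivAt x (h.hasDerivAt x hx),
    fun x hx => T.hasFDerivAt.comp_hasDerivAt x (h.hasDerivAt_deriv x hx)⟩

theorem reflect (h : TwiceDiffOn a b φ φ' φ'') :
    TwiceDiffOn a b (fun x => φ (a + b - x)) (fun x => -φ' (a + b - x))
      (fun x => φ'' (a + b - x)) := by
  have hIcc : MapsTo (fun x => a + b - x) (Icc a b) (Icc a b) := fun x hx =>
    ⟨by linarith [hx.2], by linarith [hx.1]⟩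
  have hIoo : ∀ x ∈ Ioo a b, a + b - x ∈ Ioo a b := fun x hx =>
    ⟨by linarith [hx.2], by linarith [hx.1]⟩
  refine ⟨h.continuousOn.comp (by fun_prop) hIcc,
    (h.continuousOn_deriv.comp (by fun_prop) hIcc).neg,
    fun x hx => (h.hasDerivAt _ (hIoo x hx)).comp_const_sub _ _, fun x hx => ?_⟩
  exact ((h.hasDerivAt_deriv _ (hIoo x hx)).comp_const_sub _ _).neg.congr_deriv (neg_neg _)

theorem deriv_deriv (h : TwiceDiffOn a b φ φ' φ'') {x : ℝ} (hx : x ∈ Ioo a b) :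
    deriv (deriv φ) x = φ'' x := by
  have : deriv φ =ᶠ[𝓝 x] φ' := by
    filter_upwards [isOpen_Ioo.mem_nhds hx] with y hy
    exact (h.hasDerivAt y hy).deriv
  rw [this.deriv_eq]
  exact (h.hasDerivAt_deriv x hx).deriv

theorem of_contDiffOn (hab : a < b) (hφ : ContDiffOn ℝ 2 φ (Icc a b)) :
    TwiceDiffOn a b φ (derivWithin φ (Icc a b)) (deriv (deriv φ)) := by
  have hu : UniqueDiffOn ℝ (Icc a b) := uniqueDiffOn_Icc hab
  have hφ' : ContDiffOn ℝ 1 (derivWithin φ (Icc a b)) (Icc a b) :=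
    hφ.derivWithin hu (by norm_num)
  have heq : ∀ x ∈ Ioo a b, derivWithin φ (Icc a b) x = deriv φ x := fun x hx =>
    derivWithin_of_mem_nhds (Icc_mem_nhds hx.1 hx.2)
  refine ⟨hφ.continuousOn, hφ'.continuousOn, fun x hx => ?_, fun x hx => ?_⟩
  · rw [heq x hx]
    exact ((hφ.contDiffAt (Icc_mem_nhds hx.1 hx.2)).differentiableAt (by norm_num)).hasDerivAt
  · have hd := ((hφ'.contDiffAt (Icc_mem_nhds hx.1 hx.2)).differentiableAt
      (by norm_num)).hasDerivAt
    have hev : derivWithin φ (Icc a b) =ᶠ[𝓝 x] deriv φ :=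
      eventually_of_mem (Ioo_mem_nhds hx.1 hx.2) heq
    rwa [hev.deriv_eq] at hd

end NormedSpace

end TwiceDiffOn

section UniqueContinuation

variable {E : Type*} [NormedAddCommGroup E] [NormedSpace ℝ E] {a b : ℝ}

theorem eq_zero_of_norm_deriv_le_mul_norm {f f' : ℝ → E} {K : ℝ} (hf : ContinuousOn f (Icc a b))
    (hf' : ∀ x ∈ Ioo a b, HasDerivAt f (f' x) x) (hK : ∀ x ∈ Ioo a b, ‖f' x‖ ≤ K * ‖f x‖)
    (ha : f a = 0) : ∀ x ∈ Icc a b, f x = 0 := by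
  rintro x ⟨hax, hxb⟩
  rcases hax.eq_or_lt with rfl | hax
  · exact ha
  have hle : ∀ c ∈ Ioo a x, ‖f x‖ ≤ ‖f c‖ * exp (K * (x - c)) := fun c hc => by
    have hIoo : ∀ y ∈ Ico c x, y ∈ Ioo a b := fun y hy =>
      ⟨hc.1.trans_le hy.1, hy.2.trans_le hxb⟩
    rw [← gronwallBound_ε0]
    exact norm_le_gronwallBound_of_norm_deriv_right_le
      (hf.mono (Icc_subset_Icc hc.1.le hxb)) (fun y hy => (hf' y (hIoo y hy)).hasDerivWithinAt)
      le_rfl (fun y hy => by simpa using hK y (hIoo y hy)) x ⟨hc.2.le, le_rfl⟩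
  have hlim := ContinuousWithinAt.closure_le (s := Ioo a x) (x := a)
    (f := fun _ => ‖f x‖) (g := fun c => ‖f c‖ * exp (K * (x - c)))
    (by simp [closure_Ioo hax.ne, hax.le]) continuousWithinAt_const
    (((hf a ⟨le_rfl, hax.le.trans hxb⟩).mono
      (Ioo_subset_Icc_self.trans (Icc_subset_Icc_right hxb))).norm.mul (by fun_prop)) hle
  simpa [ha] using hlim

namespace TwiceDiffOn

variable {φ φ' φ'' : ℝ → E} {M : ℝ}

theorem eq_zero_of_left (h : TwiceDiffOn a b φ φ' φ'')
    (hM : ∀ x ∈ Ioo a b, ‖φ'' x‖ ≤ M * ‖φ x‖) (ha : φ a = 0) (ha' : φ' a = 0) :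
    ∀ x ∈ Icc a b, φ x = 0 := by
  have hbound : ∀ x ∈ Ioo a b, ‖(φ' x, φ'' x)‖ ≤ max 1 M * ‖(φ x, φ' x)‖ := fun x hx => by
    have : 0 ≤ max 1 M := zero_le_one.trans (le_max_left _ _)
    refine max_le ?_ ?_
    · calc ‖φ' x‖ ≤ 1 * ‖(φ x, φ' x)‖ := by simp [Prod.norm_def]
        _ ≤ _ := by gcongr; exact le_max_left _ _
    · calc ‖φ'' x‖ ≤ M * ‖φ x‖ := hM x hx
        _ ≤ max 1 M * ‖φ x‖ := by gcongr; exact le_max_right _ _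
        _ ≤ _ := by gcongr; exact le_max_left _ _
  intro x hx
  have := eq_zero_of_norm_deriv_le_mul_norm (h.continuousOn.prodMk h.continuousOn_deriv)
    (fun x hx => (h.hasDerivAt x hx).prodMk (h.hasDerivAt_deriv x hx)) hbound
    (by simp [ha, ha']) x hx
  exact congrArg Prod.fst this

theorem eq_zero_of_right (h : TwiceDiffOn a b φ φ' φ'')
    (hM : ∀ x ∈ Ioo a b, ‖φ'' x‖ ≤ M * ‖φ x‖) (hb : φ b = 0) (hb' : φ' b = 0) :
    ∀ x ∈ Icc a b, φ x = 0 := by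
  intro x hx
  have := h.reflect.eq_zero_of_left
    (fun y hy => hM _ ⟨by linarith [hy.2], by linarith [hy.1]⟩) (by simpa using hb)
    (by simpa using hb') (a + b - x) ⟨by linarith [hx.2], by linarith [hx.1]⟩
  simpa using this

end TwiceDiffOn

end UniqueContinuation

namespace TwiceDiffOn

variable {a b : ℝ} {φ φ' φ'' θ θ' θ'' : ℝ → ℝ}

theorem lt_of_deriv_neg (h : TwiceDiffOn a b φ φ' φ'') (hab : a < b)
    (hneg : ∀ x ∈ Ioo a b, φ' x < 0) : φ b < φ a := by
  refine strictAntiOn_of_hasDerivWithinAt_neg (f' := φ') (convex_Icc a b) h.continuousOn ?_ ?_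
    (left_mem_Icc.2 hab.le) (right_mem_Icc.2 hab.le) hab
  · rw [interior_Icc]
    exact fun x hx => (h.hasDerivAt x hx).hasDerivWithinAt
  · rwa [interior_Icc]

theorem eventually_nhdsGT_lt (h : TwiceDiffOn a b φ φ' φ'') (hab : a < b) (ha : φ' a < 0) :
    ∀ᶠ x in 𝓝[>] a, φ x < φ a := by
  have hev : ∀ᶠ x in 𝓝[Icc a b] a, φ' x < 0 :=
    (h.continuousOn_deriv a (left_mem_Icc.2 hab.le)).eventually_lt_const ha
  rw [nhdsWithin_Icc_eq_nhdsGE hab] at hev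
  obtain ⟨c, hac, hc⟩ := mem_nhdsGE_iff_exists_Ico_subset.1 hev
  filter_upwards [Ioo_mem_nhdsGT (lt_min hac hab)] with x hx
  exact (h.mono le_rfl (hx.2.le.trans (min_le_right _ _))).lt_of_deriv_neg hx.1 fun z hz =>
    hc ⟨hz.1.le, hz.2.trans (hx.2.trans_le (min_le_left _ _))⟩

theorem deriv_left_nonneg (h : TwiceDiffOn a b φ φ' φ'') (hab : a < b)
    (hle : ∀ x ∈ Ioo a b, φ a ≤ φ x) : 0 ≤ φ' a := by
  by_contra! hneg
  obtain ⟨x, hlt, hx⟩ := ((h.eventually_nhdsGT_lt hab hneg).and (Ioo_mem_nhdsGT hab)).exists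
  exact hlt.not_ge (hle x hx)

theorem deriv_right_nonpos (h : TwiceDiffOn a b φ φ' φ'') (hab : a < b)
    (hle : ∀ x ∈ Ioo a b, φ b ≤ φ x) : φ' b ≤ 0 := by
  simpa using h.reflect.deriv_left_nonneg hab fun x hx => by
    simpa using hle _ ⟨by linarith [hx.2], by linarith [hx.1]⟩

theorem eventually_nhdsLT_lt (h : TwiceDiffOn a b φ φ' φ'') {x : ℝ} (hx : x ∈ Ioo a b)
    (hφ' : φ' x = 0) (hφ'' : φ'' x < 0) : ∀ᶠ y in 𝓝[<] x, φ y < φ x := by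
  have hslope : ∀ᶠ z in 𝓝[<] x, slope φ' x z < 0 :=
    (hasDerivAt_iff_tendsto_slope_left_right.1
      (h.hasDerivAt_deriv x hx)).1.eventually_lt_const hφ''
  obtain ⟨c, hcx, hc⟩ := mem_nhdsLT_iff_exists_Ioo_subset.1 hslope
  filter_upwards [Ioo_mem_nhdsLT (max_lt hcx hx.1)] with y hy
  have hneg : ∀ z ∈ Ioo y x, -φ' z < 0 := fun z hz => by
    have hs : slope φ' x z < 0 := hc ⟨(le_max_left _ _).trans_lt (hy.1.trans hz.1), hz.2⟩
    rw [slope_def_field, hφ', sub_zero, div_neg_iff] at hs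
    rcases hs with hs | hs <;> linarith [hs.1, hs.2, hz.2]
  simpa using (h.neg.mono ((le_max_right _ _).trans hy.1.le) hx.2.le).lt_of_deriv_neg hy.2 hneg

theorem deriv₂_nonneg_of_isMinOn (h : TwiceDiffOn a b φ φ' φ'') {x : ℝ} (hx : x ∈ Ioo a b)
    (hmin : IsMinOn φ (Icc a b) x) : 0 ≤ φ'' x := by
  have hloc : IsLocalMin φ x := hmin.isLocalMin (Icc_mem_nhds hx.1 hx.2)
  by_contra! hneg
  have hlt := h.eventually_nhdsLT_lt hx (hloc.hasDerivAt_eq_zero (h.hasDerivAt x hx)) hneg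
  obtain ⟨y, hlt, hge⟩ := (hlt.and (hloc.filter_mono nhdsWithin_le_nhds)).exists
  exact hlt.not_ge hge

theorem nonneg_of_deriv₂ (h : TwiceDiffOn a b φ φ' φ'') (ha : 0 ≤ φ a) (hb : 0 ≤ φ b)
    (hφ'' : ∀ x ∈ Ioo a b, φ x < 0 → φ'' x < 0) : ∀ x ∈ Icc a b, 0 ≤ φ x := by
  intro x hx
  obtain ⟨y, hy, hmin⟩ := isCompact_Icc.exists_isMinOn ⟨x, hx⟩ h.continuousOn
  by_contra! hneg
  have hφy : φ y < 0 := (hmin hx).trans_lt hneg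
  have hy' : y ∈ Ioo a b := by
    refine ⟨hy.1.lt_of_ne ?_, hy.2.lt_of_ne ?_⟩ <;> rintro rfl <;> linarith
  exact (hφ'' y hy' hφy).not_ge (h.deriv₂_nonneg_of_isMinOn hy' hmin)

theorem pos_of_deriv₂ (h : TwiceDiffOn a b φ φ' φ'') (ha : 0 ≤ φ a) (hb : 0 ≤ φ b)
    (hφ'' : ∀ x ∈ Ioo a b, φ x ≤ 0 → φ'' x < 0) : ∀ x ∈ Ioo a b, 0 < φ x := by
  have hnonneg := h.nonneg_of_deriv₂ ha hb fun x hx hneg => hφ'' x hx hneg.le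
  intro x hx
  refine (hnonneg x (Ioo_subset_Icc_self hx)).lt_of_ne' fun hzero => ?_
  refine (hφ'' x hx hzero.le).not_ge (h.deriv₂_nonneg_of_isMinOn hx fun y hy => ?_)
  simpa only [mem_ofPred_eq, hzero] using hnonneg y hy

theorem le_of_deriv₂ (h : TwiceDiffOn a b φ φ' φ'') {C : ℝ} (ha : φ a ≤ C) (hb : φ b ≤ C)
    (hφ'' : ∀ x ∈ Ioo a b, C < φ x → 0 < φ'' x) : ∀ x ∈ Icc a b, φ x ≤ C := by
  have hC : TwiceDiffOn a b (fun _ => C) (fun _ => 0) (fun _ => 0) :=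
    ⟨continuousOn_const, continuousOn_const, fun x _ => hasDerivAt_const x C,
      fun x _ => hasDerivAt_const x 0⟩
  intro x hx
  have := (hC.sub h).nonneg_of_deriv₂ (by linarith) (by linarith)
    (fun x hx hlt => by linarith [hφ'' x hx (by linarith)]) x hx
  linarith

/-- A nonnegative solution of a linear equation has only double zeros inside the interval. -/
theorem pos_of_nonneg (h : TwiceDiffOn a b φ φ' φ'') {M : ℝ}
    (hM : ∀ x ∈ Ioo a b, ‖φ'' x‖ ≤ M * ‖φ x‖) (hnonneg : ∀ x ∈ Icc a b, 0 ≤ φ x)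
    (hne : ∃ x ∈ Icc a b, φ x ≠ 0) : ∀ x ∈ Ioo a b, 0 < φ x := by
  intro x hx
  refine (hnonneg x (Ioo_subset_Icc_self hx)).lt_of_ne' fun hzero => ?_
  have hmin : IsLocalMin φ x := mem_of_superset (Icc_mem_nhds hx.1 hx.2) fun y hy => by
    simpa only [mem_ofPred_eq, hzero] using hnonneg y hy
  have hφ'x : φ' x = 0 := hmin.hasDerivAt_eq_zero (h.hasDerivAt x hx)
  obtain ⟨y, hy, hφy⟩ := hne
  rcases le_total x y with hxy | hyx
  · exact hφy ((h.mono hx.1.le le_rfl).eq_zero_of_left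
      (fun z hz => hM z ⟨hx.1.trans hz.1, hz.2⟩) hzero hφ'x y ⟨hxy, hy.2⟩)
  · exact hφy ((h.mono le_rfl hx.2.le).eq_zero_of_right
      (fun z hz => hM z ⟨hz.1, hz.2.trans hx.2⟩) hzero hφ'x y ⟨hy.1, hyx⟩)

/-- The Wronskian `φ' θ - φ θ'` cannot increase strictly, since it is nonnegative at `a` and
nonpositive at `b`. -/
theorem exists_wronskian_deriv_nonpos (hφ : TwiceDiffOn a b φ φ' φ'')
    (hθ : TwiceDiffOn a b θ θ' θ'') (hab : a < b) (ha : φ a = 0) (hb : φ b = 0)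
    (hpos : ∀ x ∈ Ioo a b, 0 < φ x) (hθa : 0 ≤ θ a) (hθb : 0 ≤ θ b) :
    ∃ x ∈ Ioo a b, φ'' x * θ x ≤ φ x * θ'' x := by
  by_contra! hlt
  have hmono : StrictMonoOn (fun x => φ' x * θ x - φ x * θ' x) (Icc a b) := by
    refine strictMonoOn_of_hasDerivWithinAt_pos (f' := fun x => φ'' x * θ x - φ x * θ'' x)
      (convex_Icc a b) ((hφ.continuousOn_deriv.mul hθ.continuousOn).sub
        (hφ.continuousOn.mul hθ.continuousOn_deriv)) ?_ ?_ <;> rw [interior_Icc] <;> intro x hx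
    · have := ((hφ.hasDerivAt_deriv x hx).mul (hθ.hasDerivAt x hx)).sub
        ((hφ.hasDerivAt x hx).mul (hθ.hasDerivAt_deriv x hx))
      exact (this.congr_deriv (by ring)).hasDerivWithinAt
    · exact sub_pos.2 (hlt x hx)
  have hW := hmono (left_mem_Icc.2 hab.le) (right_mem_Icc.2 hab.le) hab
  simp only [ha, hb, zero_mul, sub_zero] at hW
  have hWa := mul_nonneg (hφ.deriv_left_nonneg hab fun x hx => ha ▸ (hpos x hx).le) hθa
  have hWb := mul_nonpos_of_nonpos_of_nonneg
    (hφ.deriv_right_nonpos hab fun x hx => hb ▸ (hpos x hx).le) hθb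
  linarith

theorem sin_mul (k c : ℝ) : TwiceDiffOn a b (fun x => sin (k * (x - c)))
    (fun x => k * cos (k * (x - c))) (fun x => -(k ^ 2 * sin (k * (x - c)))) := by
  have hlin : ∀ x : ℝ, HasDerivAt (fun x => k * (x - c)) k x := fun x => by
    simpa using ((hasDerivAt_id x).sub_const c).const_mul k
  exact ⟨by fun_prop, by fun_prop, fun x _ => (hlin x).sin.congr_deriv (by ring),
    fun x _ => ((hlin x).cos.const_mul k).congr_deriv (by ring)⟩

end TwiceDiffOn

section Sturm

variable {a b : ℝ} {φ φ' A : ℝ → ℝ}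

theorem sin_pi_div_pos {x : ℝ} (hx : x ∈ Ioo a b) : 0 < sin (π / (b - a) * (x - a)) := by
  have hab : 0 < b - a := by linarith [hx.1, hx.2]
  have hxa : 0 < x - a := sub_pos.2 hx.1
  refine sin_pos_of_pos_of_lt_pi (by positivity) ?_
  rw [div_mul_eq_mul_div, div_lt_iff₀ hab]
  exact mul_lt_mul_of_pos_left (by linarith [hx.2]) pi_pos

theorem sin_pi_div_right (hab : a < b) : sin (π / (b - a) * (b - a)) = 0 := by
  rw [div_mul_cancel₀ _ (sub_pos.2 hab).ne', sin_pi]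

theorem TwiceDiffOn.exists_pi_div_sq_le (h : TwiceDiffOn a b φ φ' (fun x => -(φ x * A x)))
    (hab : a < b) (ha : φ a = 0) (hb : φ b = 0) (hpos : ∀ x ∈ Ioo a b, 0 < φ x) :
    ∃ x ∈ Ioo a b, (π / (b - a)) ^ 2 ≤ A x := by
  obtain ⟨x, hx, hle⟩ := h.exists_wronskian_deriv_nonpos (sin_mul (π / (b - a)) a) hab ha hb hpos
    (by simp) (sin_pi_div_right hab).ge
  refine ⟨x, hx, le_of_mul_le_mul_left ?_ (mul_pos (hpos x hx) (sin_pi_div_pos hx))⟩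
  linarith

theorem TwiceDiffOn.exists_le_pi_div_sq (h : TwiceDiffOn a b φ φ' (fun x => -(φ x * A x)))
    (hab : a < b) (ha : φ a = 0) (hb : φ b = 0) (hpos : ∀ x ∈ Ioo a b, 0 < φ x) :
    ∃ x ∈ Ioo a b, A x ≤ (π / (b - a)) ^ 2 := by
  obtain ⟨x, hx, hle⟩ := (sin_mul (π / (b - a)) a).exists_wronskian_deriv_nonpos h hab (by simp)
    (sin_pi_div_right hab) (fun x => sin_pi_div_pos) ha.ge hb.ge
  refine ⟨x, hx, le_of_mul_le_mul_left ?_ (mul_pos (hpos x hx) (sin_pi_div_pos hx))⟩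
  linarith

end Sturm

section Zeros

variable {a b c : ℝ} {g : ℝ → ℝ}

theorem exists_first_zero_right (hg : ContinuousOn g (Icc a b)) (hab : a ≤ b) (ha : 0 < g a)
    (hb : g b = 0) : ∃ c ∈ Ioc a b, g c = 0 ∧ ∀ x ∈ Ico a c, 0 < g x := by
  have hcompact : IsCompact (Icc a b ∩ g ⁻¹' {0}) :=
    isCompact_Icc.of_isClosed_subset
      (hg.preimage_isClosed_of_isClosed isClosed_Icc isClosed_singleton) inter_subset_left
  obtain ⟨c, ⟨⟨hac, hcb⟩, hc⟩, hleast⟩ := hcompact.exists_isLeast ⟨b, ⟨hab, le_rfl⟩, hb⟩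
  refine ⟨c, ⟨hac.lt_of_ne ?_, hcb⟩, hc, fun x hx => ?_⟩
  · rintro rfl
    exact ha.ne' hc
  by_contra! hneg
  obtain ⟨z, hz, hz0⟩ := intermediate_value_Icc' hx.1
    (hg.mono (Icc_subset_Icc_right (hx.2.le.trans hcb))) ⟨hneg, ha.le⟩
  exact (hz.2.trans_lt hx.2).not_ge (hleast ⟨⟨hz.1, hz.2.trans (hx.2.le.trans hcb)⟩, hz0⟩)

theorem exists_last_zero_left (hg : ContinuousOn g (Icc a b)) (hab : a ≤ b) (hb : 0 < g b)
    (ha : g a = 0) : ∃ c ∈ Ico a b, g c = 0 ∧ ∀ x ∈ Ioc c b, 0 < g x := by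
  obtain ⟨c, hc, hgc, hpos⟩ := exists_first_zero_right (g := fun x => g (-x)) (a := -b) (b := -a)
    (hg.comp continuous_neg.continuousOn fun x hx => ⟨by linarith [hx.2], by linarith [hx.1]⟩)
    (by linarith) (by simpa using hb) (by simpa using ha)
  exact ⟨-c, ⟨by linarith [hc.2], by linarith [hc.1]⟩, hgc, fun x hx => by
    simpa using hpos (-x) ⟨by linarith [hx.2], by linarith [hx.1]⟩⟩

theorem exists_Ioo_pos (hg : ContinuousOn g (Icc a b)) (ha : g a = 0) (hb : g b = 0) {x : ℝ}
    (hx : x ∈ Icc a b) (hpos : 0 < g x) :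
    ∃ c d, a ≤ c ∧ c < d ∧ d ≤ b ∧ g c = 0 ∧ g d = 0 ∧ x ∈ Ioo c d ∧ ∀ y ∈ Ioo c d, 0 < g y := by
  obtain ⟨c, hc, hgc, hleft⟩ :=
    exists_last_zero_left (hg.mono (Icc_subset_Icc_right hx.2)) hx.1 hpos ha
  obtain ⟨d, hd, hgd, hright⟩ :=
    exists_first_zero_right (hg.mono (Icc_subset_Icc_left hx.1)) hx.2 hpos hb
  exact ⟨c, d, hc.1, hc.2.trans hd.1, hd.2, hgc, hgd, ⟨hc.2, hd.1⟩, fun y hy =>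
    (le_total y x).elim (fun hyx => hleft y ⟨hy.1, hyx⟩) fun hxy => hright y ⟨hxy, hy.2⟩⟩

theorem eq_zero_of_frequently_nhdsLT (hg : ContinuousOn g (Icc a b)) (hc : c ∈ Ioc a b)
    (hfreq : ∃ᶠ x in 𝓝[<] c, g x = 0) : g c = 0 := by
  by_contra hne
  have hle : 𝓝[<] c ≤ 𝓝[Icc a b] c :=
    nhdsWithin_le_of_mem (mem_of_superset (Ioo_mem_nhdsLT hc.1) fun x hx =>
      ⟨hx.1.le, hx.2.le.trans hc.2⟩)
  exact hfreq (((hg c (Ioc_subset_Icc_self hc)).eventually_ne hne).filter_mono hle)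

theorem TwiceDiffOn.deriv_eq_zero_of_frequently_nhdsLT {g' g'' : ℝ → ℝ}
    (h : TwiceDiffOn a b g g' g'') (hc : c ∈ Ioc a b) (hfreq : ∃ᶠ x in 𝓝[<] c, g x = 0) :
    g' c = 0 := by
  refine eq_zero_of_frequently_nhdsLT h.continuousOn_deriv hc ?_
  rw [(nhdsLT_basis c).frequently_iff] at hfreq ⊢
  intro y hy
  obtain ⟨s, hs, hgs⟩ := hfreq (max a y) (max_lt hc.1 hy)
  obtain ⟨t, ht, hgt⟩ := hfreq s hs.2
  have has : a < s := (le_max_left _ _).trans_lt hs.1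
  obtain ⟨z, hz, hz'⟩ := exists_hasDerivAt_eq_zero ht.1
    (h.mono has.le (ht.2.le.trans hc.2)).continuousOn (hgs.trans hgt.symm)
    (h.mono has.le (ht.2.le.trans hc.2)).hasDerivAt
  exact ⟨z, ⟨(le_max_right _ _).trans_lt (hs.1.trans hz.1), hz.2.trans ht.2⟩, hz'⟩

end Zeros

/-- The sign structure of the difference of two solutions of an activator-inhibitor system, and of
its linearization. The positive function `θ` is a strict supersolution for the equation of `φ`
wherever `φ` and `ψ` do not have opposite signs. All conditions are written as products, so that
they are invariant under `(φ, ψ) ↦ (-φ, -ψ)`. -/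
structure SignCoupled (a b M : ℝ) (θ θ' θ'' φ φ' φ'' ψ ψ' ψ'' : ℝ → ℝ) : Prop where
  diffθ : TwiceDiffOn a b θ θ' θ''
  diffφ : TwiceDiffOn a b φ φ' φ''
  diffψ : TwiceDiffOn a b ψ ψ' ψ''
  θ_nonneg : ∀ x ∈ Icc a b, 0 ≤ θ x
  supersolution : ∀ x ∈ Ioo a b, φ x ≠ 0 → 0 ≤ φ x * ψ x → 0 < φ x * (φ'' x * θ x - φ x * θ'' x)
  inhibition : ∀ x ∈ Ioo a b, φ x = 0 → ψ x ≠ 0 → 0 < ψ x * φ'' x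
  activation : ∀ x ∈ Ioo a b, ψ x ≠ 0 → φ x * ψ x ≤ 0 → 0 < ψ x * ψ'' x
  norm_le : ∀ x ∈ Ioo a b, ‖(φ'' x, ψ'' x)‖ ≤ M * ‖(φ x, ψ x)‖

/-- `x` is the right end point of an interval on which `φ` has the sign opposite to `ψ x`. -/
structure IsExit (a b : ℝ) (φ ψ : ℝ → ℝ) (x : ℝ) : Prop where
  mem_Ioo : x ∈ Ioo a b
  eq_zero : φ x = 0
  ne_zero : ψ x ≠ 0
  eventually_neg : ∀ᶠ z in 𝓝[<] x, φ z * ψ x < 0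

theorem IsExit.neg {a b : ℝ} {φ ψ : ℝ → ℝ} {x : ℝ} (h : IsExit a b φ ψ x) :
    IsExit a b (fun x => -φ x) (fun x => -ψ x) x :=
  ⟨h.mem_Ioo, neg_eq_zero.2 h.eq_zero, neg_ne_zero.2 h.ne_zero, by
    simpa only [neg_mul_neg] using h.eventually_neg⟩

theorem IsExit.of_pos_of_neg {a b c d : ℝ} {φ ψ : ℝ → ℝ} (hac : a ≤ c) (hcd : c < d)
    (hdb : d ≤ b) (hd : φ d = 0) (hpos : ∀ x ∈ Ioo c d, 0 < φ x) (hψb : ψ b = 0) (hψd : ψ d < 0) :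
    IsExit a b φ ψ d := by
  refine ⟨⟨hac.trans_lt hcd, hdb.lt_of_ne ?_⟩, hd, hψd.ne, ?_⟩
  · rintro rfl
    exact hψd.ne hψb
  · filter_upwards [Ioo_mem_nhdsLT hcd] with z hz
    exact mul_neg_of_pos_of_neg (hpos z hz) hψd

namespace SignCoupled

variable {a b M : ℝ} {θ θ' θ'' φ φ' φ'' ψ ψ' ψ'' : ℝ → ℝ}

theorem neg (h : SignCoupled a b M θ θ' θ'' φ φ' φ'' ψ ψ' ψ'') :
    SignCoupled a b M θ θ' θ'' (fun x => -φ x) (fun x => -φ' x) (fun x => -φ'' x)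
      (fun x => -ψ x) (fun x => -ψ' x) (fun x => -ψ'' x) where
  diffθ := h.diffθ
  diffφ := h.diffφ.neg
  diffψ := h.diffψ.neg
  θ_nonneg := h.θ_nonneg
  supersolution x hx hne hmul := by
    convert h.supersolution x hx (neg_ne_zero.1 hne) (by simpa using hmul) using 1; ring
  inhibition x hx hφ hψ := by
    simpa using h.inhibition x hx (neg_eq_zero.1 hφ) (neg_ne_zero.1 hψ)
  activation x hx hψ hmul := by
    simpa using h.activation x hx (neg_ne_zero.1 hψ) (by simpa using hmul)
  norm_le x hx := by simpa [Prod.norm_def] using h.norm_le x hx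

theorem reflect (h : SignCoupled a b M θ θ' θ'' φ φ' φ'' ψ ψ' ψ'') :
    SignCoupled a b M (fun x => θ (a + b - x)) (fun x => -θ' (a + b - x))
      (fun x => θ'' (a + b - x)) (fun x => φ (a + b - x)) (fun x => -φ' (a + b - x))
      (fun x => φ'' (a + b - x)) (fun x => ψ (a + b - x)) (fun x => -ψ' (a + b - x))
      (fun x => ψ'' (a + b - x)) := by
  have hIoo : ∀ x ∈ Ioo a b, a + b - x ∈ Ioo a b := fun x hx =>
    ⟨by linarith [hx.2], by linarith [hx.1]⟩
  exact
  { diffθ := h.diffθ.reflect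
    diffφ := h.diffφ.reflect
    diffψ := h.diffψ.reflect
    θ_nonneg := fun x hx => h.θ_nonneg _ ⟨by linarith [hx.2], by linarith [hx.1]⟩
    supersolution := fun x hx => h.supersolution _ (hIoo x hx)
    inhibition := fun x hx => h.inhibition _ (hIoo x hx)
    activation := fun x hx => h.activation _ (hIoo x hx)
    norm_le := fun x hx => h.norm_le _ (hIoo x hx) }

theorem endpoint_neg (h : SignCoupled a b M θ θ' θ'' φ φ' φ'' ψ ψ' ψ'') {c d : ℝ} (hac : a ≤ c)
    (hcd : c < d) (hdb : d ≤ b) (hc : φ c = 0) (hd : φ d = 0) (hpos : ∀ x ∈ Ioo c d, 0 < φ x) :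
    ψ c < 0 ∨ ψ d < 0 := by
  by_contra! hnonneg
  have hsub : ∀ x ∈ Ioo c d, x ∈ Ioo a b := fun x hx => Ioo_subset_Ioo hac hdb hx
  have hψ : ∀ x ∈ Icc c d, 0 ≤ ψ x :=
    (h.diffψ.mono hac hdb).nonneg_of_deriv₂ hnonneg.1 hnonneg.2 fun x hx hneg =>
      neg_of_mul_pos_right (h.activation x (hsub x hx) hneg.ne
        (mul_nonpos_of_nonneg_of_nonpos (hpos x hx).le hneg.le)) hneg.le
  obtain ⟨x, hx, hle⟩ := (h.diffφ.mono hac hdb).exists_wronskian_deriv_nonpos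
    (h.diffθ.mono hac hdb) hcd hc hd hpos (h.θ_nonneg c ⟨hac, hcd.le.trans hdb⟩)
    (h.θ_nonneg d ⟨hac.trans hcd.le, hdb⟩)
  have := pos_of_mul_pos_right (h.supersolution x (hsub x hx) (hpos x hx).ne'
    (mul_nonneg (hpos x hx).le (hψ x (Ioo_subset_Icc_self hx)))) (hpos x hx).le
  linarith

theorem deriv_neg_of_isExit (h : SignCoupled a b M θ θ' θ'' φ φ' φ'' ψ ψ' ψ'') {x : ℝ}
    (hx : IsExit a b φ ψ x) (hψ : ψ x < 0) : φ' x < 0 := by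
  have hpos : ∀ᶠ z in 𝓝[<] x, 0 < φ z :=
    hx.eventually_neg.mono fun z hz => pos_of_mul_neg_left hz hψ.le
  refine lt_of_le_of_ne ?_ fun hzero => ?_
  · obtain ⟨y, hyx, hy⟩ := mem_nhdsLT_iff_exists_Ioo_subset.1 hpos
    refine (h.diffφ.mono (le_max_left a y) hx.mem_Ioo.2.le).deriv_right_nonpos
      (max_lt hx.mem_Ioo.1 hyx) fun z hz => ?_
    rw [hx.eq_zero]
    exact (hy ⟨(le_max_right _ _).trans_lt hz.1, hz.2⟩ : 0 < φ z).le
  · have hφ'' : φ'' x < 0 :=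
      neg_of_mul_pos_right (h.inhibition x hx.mem_Ioo hx.eq_zero hψ.ne) hψ.le
    obtain ⟨z, hz, hlt⟩ :=
      (hpos.and (h.diffφ.eventually_nhdsLT_lt hx.mem_Ioo hzero hφ'')).exists
    exact (hz.trans hlt).ne' hx.eq_zero

theorem exists_next_of_neg (h : SignCoupled a b M θ θ' θ'' φ φ' φ'' ψ ψ' ψ'') (hφb : φ b = 0)
    (hψb : ψ b = 0) {x : ℝ} (hx : IsExit a b φ ψ x) (hψ : ψ x < 0) :
    ∃ y > x, IsExit a b φ ψ y ∧ ψ x * ψ y < 0 := by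
  obtain ⟨⟨hax, hxb⟩, hφx, -⟩ := id hx
  obtain ⟨w, hxw, hw⟩ := mem_nhdsGT_iff_exists_Ioo_subset.1
    ((h.diffφ.mono hax.le le_rfl).eventually_nhdsGT_lt hxb (h.deriv_neg_of_isExit hx hψ))
  have hneg : ∀ z ∈ Ioo x w, φ z < 0 := fun z hz => (hw hz).trans_eq hφx
  obtain ⟨m, hxm, hm⟩ := exists_between (lt_min hxw hxb)
  obtain ⟨hmw, hmb⟩ := lt_min_iff.1 hm
  obtain ⟨y, ⟨hmy, hyb⟩, hφy, hpos⟩ := exists_first_zero_right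
    (h.diffφ.neg.continuousOn.mono (Icc_subset_Icc_left (hax.trans hxm).le)) hmb.le
    (neg_pos.2 (hneg m ⟨hxm, hmw⟩)) (neg_eq_zero.2 hφb)
  have hxy : x < y := hxm.trans hmy
  have hpos' : ∀ z ∈ Ioo x y, 0 < -φ z := fun z hz => (lt_or_ge z m).elim
    (fun hzm => neg_pos.2 (hneg z ⟨hz.1, hzm.trans hmw⟩)) fun hmz => hpos z ⟨hmz, hz.2⟩
  have hψy : 0 < ψ y := by
    rcases h.neg.endpoint_neg hax.le hxy hyb (neg_eq_zero.2 hφx) hφy hpos' with hx' | hy'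
    · linarith
    · linarith
  have hyb' : y < b := hyb.lt_of_ne (by rintro rfl; exact hψy.ne' hψb)
  refine ⟨y, hxy, ⟨⟨hax.trans hxy, hyb'⟩, neg_eq_zero.1 hφy, hψy.ne', ?_⟩,
    mul_neg_of_neg_of_pos hψ hψy⟩
  filter_upwards [Ioo_mem_nhdsLT hxy] with z hz
  exact mul_neg_of_neg_of_pos (neg_pos.1 (hpos' z hz)) hψy

theorem exists_next (h : SignCoupled a b M θ θ' θ'' φ φ' φ'' ψ ψ' ψ'') (hφb : φ b = 0)
    (hψb : ψ b = 0) {x : ℝ} (hx : IsExit a b φ ψ x) :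
    ∃ y > x, IsExit a b φ ψ y ∧ ψ x * ψ y < 0 := by
  rcases hx.ne_zero.lt_or_gt with hψ | hψ
  · exact h.exists_next_of_neg hφb hψb hx hψ
  · obtain ⟨y, hxy, hy, hmul⟩ := h.neg.exists_next_of_neg (neg_eq_zero.2 hφb) (neg_eq_zero.2 hψb)
      hx.neg (neg_neg_of_pos hψ)
    exact ⟨y, hxy, by simpa using hy.neg, by simpa using hmul⟩

theorem exists_next_zero (h : SignCoupled a b M θ θ' θ'' φ φ' φ'' ψ ψ' ψ'') (hφb : φ b = 0)
    (hψb : ψ b = 0) {x : ℝ} (hx : IsExit a b φ ψ x) :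
    ∃ y, IsExit a b φ ψ y ∧ ∃ z ∈ Icc x y, ψ z = 0 := by
  obtain ⟨y, hxy, hy, hmul⟩ := h.exists_next hφb hψb hx
  have hcont : ContinuousOn ψ (Icc x y) :=
    h.diffψ.continuousOn.mono (Icc_subset_Icc hx.mem_Ioo.1.le hy.mem_Ioo.2.le)
  refine ⟨y, hy, ?_⟩
  rcases mul_neg_iff.1 hmul with ⟨hψx, hψy⟩ | ⟨hψx, hψy⟩
  · exact intermediate_value_Icc' hxy.le hcont ⟨hψy.le, hψx.le⟩
  · exact intermediate_value_Icc hxy.le hcont ⟨hψx.le, hψy.le⟩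

/-- Otherwise exits would accumulate at a point where `φ`, `φ'`, `ψ` and `ψ'` all vanish. -/
theorem not_isExit (h : SignCoupled a b M θ θ' θ'' φ φ' φ'' ψ ψ' ψ'') (hφb : φ b = 0)
    (hψb : ψ b = 0) (x : ℝ) : ¬IsExit a b φ ψ x := by
  intro hx
  set S : Set ℝ := {y | IsExit a b φ ψ y}
  have hbdd : BddAbove S := ⟨b, fun y hy => hy.mem_Ioo.2.le⟩
  have hlt : ∀ y ∈ S, y < sSup S := fun y hy => by
    obtain ⟨z, hyz, hz, -⟩ := h.exists_next hφb hψb hy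
    exact hyz.trans_le (le_csSup hbdd hz)
  set c := sSup S
  have hc : c ∈ Ioc a b := ⟨hx.mem_Ioo.1.trans (hlt x hx), csSup_le ⟨x, hx⟩ fun y hy =>
    hy.mem_Ioo.2.le⟩
  have hφ : ∃ᶠ y in 𝓝[<] c, φ y = 0 := (nhdsLT_basis c).frequently_iff.2 fun y hy => by
    obtain ⟨s, hs, hys⟩ := exists_lt_of_lt_csSup ⟨x, hx⟩ hy
    exact ⟨s, ⟨hys, hlt s hs⟩, hs.eq_zero⟩
  have hψ : ∃ᶠ y in 𝓝[<] c, ψ y = 0 := (nhdsLT_basis c).frequently_iff.2 fun y hy => by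
    obtain ⟨s, hs, hys⟩ := exists_lt_of_lt_csSup ⟨x, hx⟩ hy
    obtain ⟨t, ht, z, hz, hψz⟩ := h.exists_next_zero hφb hψb hs
    exact ⟨z, ⟨hys.trans_le hz.1, hz.2.trans_lt (hlt t ht)⟩, hψz⟩
  have hzero := ((h.diffφ.prodMk h.diffψ).mono hx.mem_Ioo.1.le hc.2).eq_zero_of_right
    (fun y hy => h.norm_le y ⟨hx.mem_Ioo.1.trans hy.1, hy.2.trans_le hc.2⟩)
    (Prod.ext (eq_zero_of_frequently_nhdsLT h.diffφ.continuousOn hc hφ)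
      (eq_zero_of_frequently_nhdsLT h.diffψ.continuousOn hc hψ))
    (Prod.ext (h.diffφ.deriv_eq_zero_of_frequently_nhdsLT hc hφ)
      (h.diffψ.deriv_eq_zero_of_frequently_nhdsLT hc hψ)) x ⟨le_rfl, (hlt x hx).le⟩
  exact hx.ne_zero (congrArg Prod.snd hzero)

theorem nonpos (h : SignCoupled a b M θ θ' θ'' φ φ' φ'' ψ ψ' ψ'') (hφa : φ a = 0) (hφb : φ b = 0)
    (hψa : ψ a = 0) (hψb : ψ b = 0) : ∀ x ∈ Icc a b, φ x ≤ 0 := by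
  intro x hx
  by_contra! hpos
  obtain ⟨c, d, hac, hcd, hdb, hc, hd, -, hcd_pos⟩ :=
    exists_Ioo_pos h.diffφ.continuousOn hφa hφb hx hpos
  rcases h.endpoint_neg hac hcd hdb hc hd hcd_pos with hψ | hψ
  · refine h.reflect.not_isExit (by simpa using hφa) (by simpa using hψa) (a + b - c)
      (IsExit.of_pos_of_neg (c := a + b - d) (by linarith) (by linarith) (by linarith)
        (by simpa using hc) (fun z hz => hcd_pos _ ⟨by linarith [hz.2], by linarith [hz.1]⟩)
        (by simpa using hψa) (by simpa using hψ))
  · exact h.not_isExit hφb hψb d (.of_pos_of_neg hac hcd hdb hd hcd_pos hψb hψ)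

theorem eq_zero (h : SignCoupled a b M θ θ' θ'' φ φ' φ'' ψ ψ' ψ'') (hφa : φ a = 0)
    (hφb : φ b = 0) (hψa : ψ a = 0) (hψb : ψ b = 0) : ∀ x ∈ Icc a b, φ x = 0 ∧ ψ x = 0 := by
  have hφ : ∀ x ∈ Icc a b, φ x = 0 := fun x hx =>
    le_antisymm (h.nonpos hφa hφb hψa hψb x hx) (by
      simpa using h.neg.nonpos (by simpa) (by simpa) (by simpa) (by simpa) x hx)
  have hψ'' : ∀ x ∈ Ioo a b, ψ x ≠ 0 → 0 < ψ x * ψ'' x := fun x hx hne =>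
    h.activation x hx hne (by simp [hφ x (Ioo_subset_Icc_self hx)])
  refine fun x hx => ⟨hφ x hx, le_antisymm ?_ ?_⟩
  · exact h.diffψ.le_of_deriv₂ hψa.le hψb.le
      (fun y hy hlt => pos_of_mul_pos_right (hψ'' y hy hlt.ne') hlt.le) x hx
  · exact h.diffψ.nonneg_of_deriv₂ hψa.ge hψb.ge
      (fun y hy hlt => neg_of_mul_pos_right (hψ'' y hy hlt.ne) hlt.le) x hx

end SignCoupled

section Superposition

variable {Ω V W : Type*} [TopologicalSpace Ω] [NormedAddCommGroup V] [NormedAddCommGroup W]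

/-- The superposition (Nemytskii) operator `y ↦ (x ↦ n (x, y x))`. -/
def superposition (n : C(Ω × V, W)) (y : C(Ω, V)) : C(Ω, W) :=
  n.comp ((ContinuousMap.id Ω).prodMk y)

@[simp]
theorem superposition_apply (n : C(Ω × V, W)) (y : C(Ω, V)) (x : Ω) :
    superposition n y x = n (x, y x) := rfl

theorem continuous_superposition [LocallyCompactSpace Ω] (n : C(Ω × V, W)) :
    Continuous (superposition n) :=
  ContinuousMap.continuous_of_continuous_uncurry _ <| by
    simp only [Function.uncurry_def, superposition_apply]
    fun_prop

variable [CompactSpace Ω] [NormedSpace ℝ V] [NormedSpace ℝ W]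

/-- Pointwise application of a continuous family of continuous linear maps. -/
noncomputable def pointwiseCLM (A : C(Ω, V →L[ℝ] W)) : C(Ω, V) →L[ℝ] C(Ω, W) :=
  LinearMap.mkContinuous
    { toFun := fun h => ⟨fun x => A x (h x), A.continuous.clm_apply h.continuous⟩
      map_add' := fun h k => by ext x; simp
      map_smul' := fun c h => by ext x; simp } ‖A‖
    (fun h => (ContinuousMap.norm_le _ (by positivity)).2 fun x =>
      (A x).le_of_opNorm_le_of_le (A.norm_coe_le_norm x) (h.norm_coe_le_norm x))

@[simp]
theorem pointwiseCLM_apply (A : C(Ω, V →L[ℝ] W)) (h : C(Ω, V)) (x : Ω) :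
    pointwiseCLM A h x = A x (h x) := rfl

theorem hasStrictFDerivAt_superposition [LocallyCompactSpace Ω] {n : C(Ω × V, W)}
    {n' : C(Ω × V, V →L[ℝ] W)} (hn : ∀ x v, HasFDerivAt (fun v => n (x, v)) (n' (x, v)) v)
    (y : C(Ω, V)) :
    HasStrictFDerivAt (superposition n) (pointwiseCLM (superposition n' y)) y := by
  refine .of_isLittleO (Asymptotics.isLittleO_iff.2 fun c hc => ?_)
  obtain ⟨δ, hδ, hball⟩ := Metric.continuous_iff.1 (continuous_superposition n') y c hc
  have hnhds : Metric.ball y δ ×ˢ Metric.ball y δ ∈ 𝓝 (y, y) :=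
    prod_mem_nhds (Metric.ball_mem_nhds y hδ) (Metric.ball_mem_nhds y hδ)
  filter_upwards [hnhds] with ⟨y₁, y₂⟩ ⟨hy₁, hy₂⟩
  refine (ContinuousMap.norm_le _ (by positivity)).2 fun x => ?_
  have hmem : ∀ k ∈ Metric.ball y δ, k x ∈ Metric.ball (y x) δ := fun k hk =>
    (ContinuousMap.dist_apply_le_dist x).trans_lt hk
  have hderiv : ∀ z ∈ Metric.ball (y x) δ, ‖n' (x, z) - n' (x, y x)‖ ≤ c := fun z hz => by
    have hmem : y + .const Ω (z - y x) ∈ Metric.ball y δ := by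
      rw [mem_ball_iff_norm, add_sub_cancel_left]
      exact ((ContinuousMap.norm_le _ (norm_nonneg _)).2 fun _ => le_rfl).trans_lt
        (mem_ball_iff_norm.1 hz)
    have hx := (ContinuousMap.dist_apply_le_dist x).trans (hball _ hmem).le
    simpa [dist_eq_norm] using hx
  refine ((convex_ball (y x) δ).norm_image_sub_le_of_norm_hasFDerivWithin_le'
    (fun z _ => (hn x z).hasFDerivWithinAt) hderiv (hmem _ hy₂) (hmem _ hy₁)).trans ?_
  gcongr
  exact (y₁ - y₂).norm_coe_le_norm x

end Superposition

section FixedPoint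

theorem isInvertible_id_sub_of_isCompactOperator {E : Type*} [NormedAddCommGroup E]
    [NormedSpace ℝ E] [CompleteSpace E] {A : E →L[ℝ] E} (hA : IsCompactOperator A)
    (hinj : ∀ h, A h = h → h = 0) : (ContinuousLinearMap.id ℝ E - A).IsInvertible := by
  rcases hA.hasEigenvalue_or_mem_resolventSet (one_ne_zero (α := ℝ)) with h | h
  · obtain ⟨v, hv⟩ := h.exists_hasEigenvector
    exact (hv.2 (hinj v (by simpa using hv.apply_eq_smul))).elim
  · obtain ⟨e, he⟩ : IsUnit (1 - A) := by simpa [spectrum.mem_resolventSet_iff] using h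
    exact ⟨ContinuousLinearEquiv.ofUnit e, he⟩

theorem eventually_exists_fixedPoint {P E : Type*} [NormedAddCommGroup P] [NormedSpace ℝ P]
    [CompleteSpace P] [NormedAddCommGroup E] [NormedSpace ℝ E] [CompleteSpace E] {Ψ : P × E → E}
    {Ψ' : P × E →L[ℝ] E} {s₀ : P} {w₀ : E} (hΨ : HasStrictFDerivAt Ψ Ψ' (s₀, w₀))
    (hcompact : IsCompactOperator (Ψ' ∘L .inr ℝ P E)) (hinj : ∀ h, Ψ' (0, h) = h → h = 0)
    (hw₀ : Ψ (s₀, w₀) = w₀) {U : Set E} (hU : U ∈ 𝓝 w₀) :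
    ∀ᶠ s in 𝓝 s₀, ∃ w ∈ U, Ψ (s, w) = w := by
  have hΦ : HasStrictFDerivAt (fun p => p.2 - Ψ p) (.snd ℝ P E - Ψ') (s₀, w₀) :=
    hasStrictFDerivAt_snd.sub hΨ
  have hinv : ((.snd ℝ P E - Ψ') ∘L .inr ℝ P E).IsInvertible :=
    isInvertible_id_sub_of_isCompactOperator hcompact hinj
  filter_upwards [hΦ.eventually_apply_implicitFunctionOfProdDomain hinv,
    (hΦ.tendsto_implicitFunctionOfProdDomain hinv).eventually_mem hU] with s hs hmem
  exact ⟨_, hmem, (sub_eq_zero.1 (hs.trans (sub_eq_zero.2 hw₀.symm))).symm⟩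

theorem isClosed_exists_fixedPoint {P E : Type*} [TopologicalSpace P] [T2Space P]
    [TopologicalSpace E] [T2Space E] {Ψ : P × E → E} (hΨ : Continuous Ψ) {S : Set P} {K : Set E}
    {Q : Set (P × E)} (hS : IsCompact S) (hK : IsCompact K) (hQ : IsClosed Q)
    (hfst : MapsTo Prod.fst Q S) (hmaps : MapsTo Ψ Q K) :
    IsClosed {s | ∃ w, (s, w) ∈ Q ∧ Ψ (s, w) = w} := by
  have hcompact : IsCompact {p ∈ Q | Ψ p = p.2} :=
    (hS.prod hK).of_isClosed_subset (hQ.inter (isClosed_eq hΨ continuous_snd))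
      fun p hp => ⟨hfst hp.1, hp.2 ▸ hmaps hp.1⟩
  convert (hcompact.image continuous_fst).isClosed using 1
  ext s
  simp

end FixedPoint

section Green

variable {W : Type*} [NormedAddCommGroup W] [NormedSpace ℝ W] {a b : ℝ}

/-- The primitive vanishing at the left endpoint, as an operator on continuous functions. -/
noncomputable def primitiveCLM (W : Type*) [NormedAddCommGroup W] [NormedSpace ℝ W]
    (hab : a ≤ b) : C(Icc a b, W) →L[ℝ] C(Icc a b, W) :=
  LinearMap.mkContinuous
    { toFun := fun g => ⟨fun x => ∫ t in a..x, IccExtend hab g t,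
        (intervalIntegral.continuous_primitive
          (fun _ _ => g.continuous.Icc_extend'.intervalIntegrable _ _) a).comp
          continuous_subtype_val⟩
      map_add' := fun g k => by
        ext x
        exact intervalIntegral.integral_add (g.continuous.Icc_extend'.intervalIntegrable _ _)
          (k.continuous.Icc_extend'.intervalIntegrable _ _)
      map_smul' := fun c g => by
        ext x
        exact intervalIntegral.integral_smul c (IccExtend hab g) } (b - a)
    (fun g => (ContinuousMap.norm_le _ (by have := sub_nonneg.2 hab; positivity)).2 fun x => by
      refine (intervalIntegral.norm_integral_le_of_norm_le_const
        (fun t _ => g.norm_coe_le_norm _)).trans ?_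
      rw [abs_of_nonneg (sub_nonneg.2 x.2.1), mul_comm]
      gcongr
      exact x.2.2)

theorem primitiveCLM_apply (hab : a ≤ b) (g : C(Icc a b, W)) (x : Icc a b) :
    primitiveCLM W hab g x = ∫ t in a..x, IccExtend hab g t := rfl

theorem dist_primitiveCLM_le (hab : a ≤ b) (g : C(Icc a b, W)) (x y : Icc a b) :
    dist (primitiveCLM W hab g x) (primitiveCLM W hab g y) ≤ ‖g‖ * dist x y := by
  rw [primitiveCLM_apply, primitiveCLM_apply, dist_eq_norm,
    intervalIntegral.integral_interval_sub_left (g.continuous.Icc_extend'.intervalIntegrable _ _)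
      (g.continuous.Icc_extend'.intervalIntegrable _ _)]
  exact intervalIntegral.norm_integral_le_of_norm_le_const fun t _ => g.norm_coe_le_norm _

theorem isCompactOperator_primitiveCLM [ProperSpace W] (hab : a ≤ b) :
    IsCompactOperator (primitiveCLM W hab) := by
  rw [isCompactOperator_iff_exists_mem_nhds_image_subset_compact]
  set A : Set (BoundedContinuousFunction (Icc a b) W) :=
    {F | (∀ x, F x ∈ Metric.closedBall (0 : W) (b - a)) ∧ LipschitzWith 1 F}
  have hA : IsCompact (closure A) :=
    BoundedContinuousFunction.arzela_ascoli _ (isCompact_closedBall (0 : W) (b - a)) A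
      (fun F x hF => hF.1 x)
      (LipschitzWith.uniformEquicontinuous _ 1 fun F => F.2.2).equicontinuous
  let e := ContinuousMap.linearIsometryBoundedOfCompact (Icc a b) W ℝ
  refine ⟨Metric.ball 0 1, Metric.ball_mem_nhds _ one_pos, _, hA.image e.symm.continuous, ?_⟩
  rintro _ ⟨g, hg, rfl⟩
  have hg1 : ‖g‖ ≤ 1 := (mem_ball_zero_iff.1 hg).le
  refine ⟨e (primitiveCLM W hab g), subset_closure ⟨fun x => ?_, .of_dist_le_mul fun x y => ?_⟩,
    e.symm_apply_apply _⟩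
  · have h0 : primitiveCLM W hab g ⟨a, le_rfl, hab⟩ = 0 := by simp [primitiveCLM_apply]
    have hx := dist_primitiveCLM_le hab g x ⟨a, le_rfl, hab⟩
    rw [h0, Subtype.dist_eq, Real.dist_eq, abs_of_nonneg (sub_nonneg.2 x.2.1)] at hx
    exact hx.trans ((mul_le_of_le_one_left (sub_nonneg.2 x.2.1) hg1).trans
      (sub_le_sub_right x.2.2 a))
  · exact (dist_primitiveCLM_le hab g x y).trans (by gcongr; exact hg1)

/-- The vector `w` multiplied by the affine function with values `0` at `a` and `1` at `b`. -/
noncomputable def rampCLM (W : Type*) [NormedAddCommGroup W] [NormedSpace ℝ W] (hab : a ≤ b) :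
    W →L[ℝ] C(Icc a b, W) :=
  LinearMap.mkContinuous
    { toFun := fun w => ⟨fun x => (((x : ℝ) - a) / (b - a)) • w, by fun_prop⟩
      map_add' := fun g k => by ext x; simp
      map_smul' := fun c w => by ext x; exact smul_comm _ _ _ } 1
    (fun w => (ContinuousMap.norm_le _ (by positivity)).2 fun x => by
      have hxa : 0 ≤ (x : ℝ) - a := sub_nonneg.2 x.2.1
      have hba : 0 ≤ b - a := sub_nonneg.2 hab
      change ‖(((x : ℝ) - a) / (b - a)) • w‖ ≤ _
      rw [norm_smul, Real.norm_of_nonneg (by positivity)]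
      gcongr
      exact div_le_one_of_le₀ (sub_le_sub_right x.2.2 a) hba)

/-- The solution operator `g ↦ φ` of `-φ'' = g` on `[a, b]` with zero boundary values. -/
noncomputable def greenCLM (W : Type*) [NormedAddCommGroup W] [NormedSpace ℝ W] (hab : a ≤ b) :
    C(Icc a b, W) →L[ℝ] C(Icc a b, W) :=
  (rampCLM W hab ∘L ContinuousMap.evalCLM ℝ (⟨b, hab, le_rfl⟩ : Icc a b) - .id ℝ _) ∘L
    primitiveCLM W hab ∘L primitiveCLM W hab

theorem greenCLM_apply (hab : a ≤ b) (g : C(Icc a b, W)) (x : Icc a b) :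
    greenCLM W hab g x = ((x - a) / (b - a)) •
        primitiveCLM W hab (primitiveCLM W hab g) ⟨b, hab, le_rfl⟩ -
      primitiveCLM W hab (primitiveCLM W hab g) x := rfl

theorem isCompactOperator_greenCLM [ProperSpace W] (hab : a ≤ b) :
    IsCompactOperator (greenCLM W hab) :=
  ((isCompactOperator_primitiveCLM hab).comp_clm (primitiveCLM W hab)).clm_comp
    (rampCLM W hab ∘L ContinuousMap.evalCLM ℝ (⟨b, hab, le_rfl⟩ : Icc a b) -
      ContinuousLinearMap.id ℝ C(Icc a b, W))

theorem exists_contDiff_eq_greenCLM [CompleteSpace W] (hab : a < b) (g : C(Icc a b, W)) :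
    ∃ φ φ' : ℝ → W, ContDiff ℝ 2 φ ∧ TwiceDiffOn a b φ φ' (fun x => -IccExtend hab.le g x) ∧
      φ a = 0 ∧ φ b = 0 ∧ ∀ x : Icc a b, greenCLM W hab.le g x = φ x := by
  set c : W := primitiveCLM W hab.le (primitiveCLM W hab.le g) ⟨b, hab.le, le_rfl⟩ with hc
  set p : ℝ → W := fun y => ∫ t in a..y, IccExtend hab.le g t
  set q : ℝ → W := fun y => ∫ t in a..y, p t
  have hg : Continuous (IccExtend hab.le g) := g.continuous.Icc_extend'
  have hp : ∀ x, HasDerivAt p (IccExtend hab.le g x) x := fun x =>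
    (hg.integral_hasStrictDerivAt a x).hasDerivAt
  have hpc : Continuous p := continuous_iff_continuousAt.2 fun x => (hp x).continuousAt
  have hq : ∀ x, HasDerivAt q (p x) x := fun x => (hpc.integral_hasStrictDerivAt a x).hasDerivAt
  have hPP : ∀ x : Icc a b, primitiveCLM W hab.le (primitiveCLM W hab.le g) x = q x := fun x =>
    intervalIntegral.integral_congr fun t ht => by
      rw [uIcc_of_le x.2.1] at ht
      rw [IccExtend_of_mem hab.le _ ⟨ht.1, ht.2.trans x.2.2⟩, primitiveCLM_apply]
  have hφ : ∀ x, HasDerivAt (fun x => ((x - a) / (b - a)) • c - q x)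
      ((1 / (b - a)) • c - p x) x := fun x =>
    ((((hasDerivAt_id x).sub_const a).div_const (b - a)).smul_const c).sub (hq x)
  have hφ' : ∀ x, HasDerivAt (fun x => (1 / (b - a)) • c - p x) (-IccExtend hab.le g x) x :=
    fun x => (hp x).const_sub _
  refine ⟨_, _, ?_, ⟨fun x _ => (hφ x).continuousAt.continuousWithinAt,
    fun x _ => (hφ' x).continuousAt.continuousWithinAt, fun x _ => hφ x, fun x _ => hφ' x⟩,
    by simp [q], ?_, fun x => ?_⟩
  · rw [← one_add_one_eq_two, contDiff_succ_iff_deriv]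
    refine ⟨fun x => (hφ x).differentiableAt, by simp, ?_⟩
    rw [funext fun x => (hφ x).deriv, contDiff_one_iff_deriv]
    exact ⟨fun x => (hφ' x).differentiableAt, by rw [funext fun x => (hφ' x).deriv]; exact hg.neg⟩
  · rw [div_self (sub_ne_zero.2 hab.ne'), one_smul, hc, hPP, sub_self]
  · rw [greenCLM_apply, hPP x]

theorem TwiceDiffOn.eq_zero_of_deriv₂_eq_zero {φ φ' φ'' : ℝ → W} (h : TwiceDiffOn a b φ φ' φ'')
    (h₂ : ∀ x ∈ Ioo a b, φ'' x = 0) (hab : a < b) (ha : φ a = 0) (hb : φ b = 0) :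
    ∀ x ∈ Icc a b, φ x = 0 := by
  have hφ' : ∀ x ∈ Icc a b, φ' x - φ' a = 0 :=
    eq_zero_of_norm_deriv_le_mul_norm (K := 0) (h.continuousOn_deriv.sub continuousOn_const)
      (fun x hx => (h.hasDerivAt_deriv x hx).sub_const _) (fun x hx => by simp [h₂ x hx])
      (sub_self _)
  have hφ : ∀ x ∈ Icc a b, φ x - (x - a) • φ' a = 0 :=
    eq_zero_of_norm_deriv_le_mul_norm (K := 0) (h.continuousOn.sub (by fun_prop))
      (fun x hx => (h.hasDerivAt x hx).sub (((hasDerivAt_id x).sub_const a).smul_const _))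
      (fun x hx => by simp [hφ' x (Ioo_subset_Icc_self hx)]) (by simp [ha])
  have hφ'a : φ' a = 0 := by
    simpa [hb, sub_ne_zero.2 hab.ne'] using hφ b (right_mem_Icc.2 hab.le)
  simpa [hφ'a] using hφ

theorem TwiceDiffOn.greenCLM_eq [CompleteSpace W] {φ φ' φ'' : ℝ → W}
    (h : TwiceDiffOn a b φ φ' φ'') (hab : a < b) (ha : φ a = 0) (hb : φ b = 0)
    {g : C(Icc a b, W)} (hg : ∀ x : Icc a b, φ'' x = -g x) (x : Icc a b) :
    greenCLM W hab.le g x = φ x := by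
  obtain ⟨χ, χ', -, hχ, hχa, hχb, hgχ⟩ := exists_contDiff_eq_greenCLM hab g
  rw [hgχ, ← sub_eq_zero]
  refine (hχ.sub h).eq_zero_of_deriv₂_eq_zero (fun y hy => ?_) hab (by simp [hχa, ha])
    (by simp [hχb, hb]) x x.2
  rw [IccExtend_of_mem hab.le _ (Ioo_subset_Icc_self hy), hg ⟨y, Ioo_subset_Icc_self hy⟩, sub_self]

end Green

/-- The data of a system `-u'' = u * growth x (u, v)`, `-v'' = source u - decay * v` in which `u`
is the population density and `v` the inhibitor it produces. -/
structure Kinetics where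
  growth : ℝ → ℝ × ℝ → ℝ
  source : ℝ → ℝ
  decay : ℝ
  contDiff_growth : ContDiff ℝ 1 (Function.uncurry growth)
  contDiff_source : ContDiff ℝ 1 source

namespace Kinetics

variable {K : Kinetics} {L : ℝ}

/-- The right-hand side of the system. -/
def reaction (K : Kinetics) (x : ℝ) (w : ℝ × ℝ) : ℝ × ℝ :=
  (w.1 * K.growth x w, K.source w.1 - K.decay * w.2)

/-- Both densities inhibit the growth, the source vanishes at zero density and increases with it,
and the inhibitor decays. -/
structure Admissible (K : Kinetics) : Prop where
  fderiv_growth_fst_neg : ∀ x w, 0 ≤ w → fderiv ℝ (K.growth x) w (1, 0) < 0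
  fderiv_growth_snd_neg : ∀ x w, 0 ≤ w → fderiv ℝ (K.growth x) w (0, 1) < 0
  source_zero : K.source 0 = 0
  deriv_source_pos : ∀ p, 0 ≤ p → 0 < deriv K.source p
  decay_pos : 0 < K.decay

/-- `w` solves the Dirichlet problem `-w'' = reaction x w` on `[0, L]`, with first derivative
`w'`. -/
structure IsSolution (K : Kinetics) (L : ℝ) (w w' : ℝ → ℝ × ℝ) : Prop where
  twiceDiffOn : TwiceDiffOn 0 L w w' (fun x => -K.reaction x (w x))
  left : w 0 = 0
  right : w L = 0

/-- A solution both of whose components are positive inside the interval. -/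
structure IsPosSolution (K : Kinetics) (L : ℝ) (w w' : ℝ → ℝ × ℝ) : Prop
    extends IsSolution K L w w' where
  fst_pos : ∀ x ∈ Ioo 0 L, 0 < (w x).1
  snd_pos : ∀ x ∈ Ioo 0 L, 0 < (w x).2

section Reaction

theorem contDiff_growth_right (K : Kinetics) (x : ℝ) : ContDiff ℝ 1 (K.growth x) :=
  K.contDiff_growth.comp (contDiff_const.prodMk contDiff_id)

theorem contDiff_reaction (K : Kinetics) : ContDiff ℝ 1 (Function.uncurry K.reaction) :=
  ((contDiff_fst.comp contDiff_snd).mul K.contDiff_growth).prodMk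
    ((K.contDiff_source.comp (contDiff_fst.comp contDiff_snd)).sub
      (contDiff_const.mul (contDiff_snd.comp contDiff_snd)))

theorem differentiable_reaction (K : Kinetics) (x : ℝ) : Differentiable ℝ (K.reaction x) :=
  (K.contDiff_reaction.comp (contDiff_const.prodMk contDiff_id)).differentiable one_ne_zero

theorem fderiv_reaction_apply (K : Kinetics) (x : ℝ) (w h : ℝ × ℝ) :
    fderiv ℝ (K.reaction x) w h =
      (h.1 * K.growth x w + w.1 * fderiv ℝ (K.growth x) w h,
        deriv K.source w.1 * h.1 - K.decay * h.2) := by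
  have hg := ((K.contDiff_growth_right x).differentiable one_ne_zero w).hasFDerivAt
  have hs := (K.contDiff_source.differentiable one_ne_zero w.1).hasDerivAt.comp_hasFDerivAt w
    (hasFDerivAt_fst (𝕜 := ℝ))
  have hr := (hasFDerivAt_fst.mul hg).prodMk (hs.sub (hasFDerivAt_snd.const_mul K.decay))
  rw [HasFDerivAt.fderiv (f := K.reaction x) hr]
  simp [mul_comm, add_comm]

theorem continuous_fderiv_reaction (K : Kinetics) :
    Continuous fun p : ℝ × ℝ × ℝ => fderiv ℝ (K.reaction p.1) p.2 := by
  have h : ContDiff ℝ 1 (fun q : (ℝ × ℝ × ℝ) × ℝ × ℝ => K.reaction q.1.1 q.2) :=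
    K.contDiff_reaction.comp ((contDiff_fst.comp contDiff_fst).prodMk contDiff_snd)
  exact (ContDiff.fderiv (n := 0) (f := fun p : ℝ × ℝ × ℝ => K.reaction p.1) h contDiff_snd
    (by norm_num)).continuous

theorem exists_norm_reaction_sub_le (K : Kinetics) (a b R : ℝ) :
    ∃ M, ∀ x ∈ Icc a b, ∀ w ∈ Metric.closedBall 0 R, ∀ z ∈ Metric.closedBall 0 R,
      ‖K.reaction x z - K.reaction x w‖ ≤ M * ‖z - w‖ := by
  obtain ⟨M, hM⟩ := ((isCompact_Icc (a := a) (b := b)).prod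
    (isCompact_closedBall (0 : ℝ × ℝ) R)).exists_bound_of_continuousOn
      K.continuous_fderiv_reaction.continuousOn
  exact ⟨M, fun x hx w hw z hz => (convex_closedBall 0 R).norm_image_sub_le_of_norm_fderiv_le
    (fun y _ => K.differentiable_reaction x y) (fun y hy => hM (x, y) ⟨hx, hy⟩) hw hz⟩

end Reaction

namespace Admissible

theorem growth_lt (hK : K.Admissible) (x : ℝ) {w z : ℝ × ℝ} (hw : 0 ≤ w) (hwz : w < z) :
    K.growth x z < K.growth x w := by
  obtain ⟨y, hy, hmvt⟩ := domain_mvt (f := K.growth x) (s := univ)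
    (fun y _ => ((K.contDiff_growth_right x).differentiable one_ne_zero
      y).hasFDerivAt.hasFDerivWithinAt) convex_univ (mem_univ w) (mem_univ z)
  have hy0 : 0 ≤ y := hw.trans (segment_subset_Icc hwz.le hy).1
  have hsplit : z - w = (z.1 - w.1) • (1, 0) + (z.2 - w.2) • (0, 1) := by ext <;> simp
  rw [hsplit, map_add, map_smul, map_smul, smul_eq_mul, smul_eq_mul] at hmvt
  have hu := hK.fderiv_growth_fst_neg x y hy0
  have hv := hK.fderiv_growth_snd_neg x y hy0
  rcases Prod.lt_iff.1 hwz with ⟨h₁, h₂⟩ | ⟨h₁, h₂⟩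
  · linarith [mul_neg_of_pos_of_neg (sub_pos.2 h₁) hu,
      mul_nonpos_of_nonneg_of_nonpos (sub_nonneg.2 h₂) hv.le]
  · linarith [mul_neg_of_pos_of_neg (sub_pos.2 h₂) hv,
      mul_nonpos_of_nonneg_of_nonpos (sub_nonneg.2 h₁) hu.le]

theorem growth_le (hK : K.Admissible) (x : ℝ) {w z : ℝ × ℝ} (hw : 0 ≤ w) (hwz : w ≤ z) :
    K.growth x z ≤ K.growth x w :=
  hwz.eq_or_lt.elim (fun h => h ▸ le_rfl) fun h => (hK.growth_lt x hw h).le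

theorem strictMonoOn_source (hK : K.Admissible) : StrictMonoOn K.source (Ici 0) :=
  strictMonoOn_of_deriv_pos (convex_Ici 0) K.contDiff_source.continuous.continuousOn fun p hp =>
    hK.deriv_source_pos p (interior_subset hp)

theorem source_nonneg (hK : K.Admissible) {p : ℝ} (hp : 0 ≤ p) : 0 ≤ K.source p :=
  hK.source_zero.ge.trans (hK.strictMonoOn_source.monotoneOn (mem_Ici.2 le_rfl) hp hp)

theorem source_pos (hK : K.Admissible) {p : ℝ} (hp : 0 < p) : 0 < K.source p :=
  hK.source_zero.ge.trans_lt (hK.strictMonoOn_source (mem_Ici.2 le_rfl) hp.le hp)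

theorem mul_growth_sub_growth_pos (hK : K.Admissible) (x : ℝ) {w z : ℝ × ℝ} (hw : 0 ≤ w)
    (hz : 0 ≤ z) (hne : z.1 - w.1 ≠ 0) (hle : 0 ≤ (z.1 - w.1) * (z.2 - w.2)) :
    0 < (z.1 - w.1) * (K.growth x w - K.growth x z) := by
  rcases (sub_ne_zero.1 hne).lt_or_gt with h | h
  · have h₂ : z.2 ≤ w.2 := by nlinarith
    exact mul_pos_of_neg_of_neg (sub_neg.2 h)
      (sub_neg.2 (hK.growth_lt x hz (Prod.lt_iff.2 (.inl ⟨h, h₂⟩))))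
  · have h₂ : w.2 ≤ z.2 := by nlinarith
    exact mul_pos (sub_pos.2 h) (sub_pos.2 (hK.growth_lt x hw (Prod.lt_iff.2 (.inl ⟨h, h₂⟩))))

theorem sub_mul_growth_sub_growth_pos (hK : K.Admissible) (x : ℝ) {w z : ℝ × ℝ} (hw : 0 ≤ w)
    (hz : 0 ≤ z) (heq : z.1 = w.1) (hne : z.2 - w.2 ≠ 0) :
    0 < (z.2 - w.2) * (K.growth x w - K.growth x z) := by
  rcases (sub_ne_zero.1 hne).lt_or_gt with h | h
  · exact mul_pos_of_neg_of_neg (sub_neg.2 h)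
      (sub_neg.2 (hK.growth_lt x hz (Prod.lt_iff.2 (.inr ⟨heq.le, h⟩))))
  · exact mul_pos (sub_pos.2 h)
      (sub_pos.2 (hK.growth_lt x hw (Prod.lt_iff.2 (.inr ⟨heq.ge, h⟩))))

theorem mul_source_sub_source_nonpos (hK : K.Admissible) {p q c : ℝ} (hp : 0 ≤ p) (hq : 0 ≤ q)
    (hle : (q - p) * c ≤ 0) : c * (K.source q - K.source p) ≤ 0 := by
  rcases lt_trichotomy p q with h | rfl | h
  · have hs := hK.strictMonoOn_source hp hq h
    nlinarith [nonpos_of_mul_nonpos_right hle (sub_pos.2 h)]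
  · simp
  · have hs := hK.strictMonoOn_source hq hp h
    have hc : 0 ≤ c := by nlinarith
    exact mul_nonpos_of_nonneg_of_nonpos hc (sub_nonpos.2 hs.le)

end Admissible

namespace IsSolution

variable {w w' : ℝ → ℝ × ℝ}

theorem twiceDiffOn_fst (h : K.IsSolution L w w') :
    TwiceDiffOn 0 L (fun x => (w x).1) (fun x => (w' x).1)
      (fun x => -((w x).1 * K.growth x (w x))) :=
  h.twiceDiffOn.clm_comp (.fst ℝ ℝ ℝ)

theorem twiceDiffOn_snd (h : K.IsSolution L w w') :
    TwiceDiffOn 0 L (fun x => (w x).2) (fun x => (w' x).2)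
      (fun x => -(K.source (w x).1 - K.decay * (w x).2)) :=
  h.twiceDiffOn.clm_comp (.snd ℝ ℝ ℝ)

end IsSolution

namespace IsPosSolution

variable {w w' : ℝ → ℝ × ℝ}

theorem nonneg (h : K.IsPosSolution L w w') : ∀ x ∈ Icc 0 L, 0 ≤ w x := by
  intro x hx
  rcases hx.1.eq_or_lt with rfl | h0
  · exact h.left.ge
  rcases hx.2.eq_or_lt with rfl | hL
  · exact h.right.ge
  exact ⟨(h.fst_pos x ⟨h0, hL⟩).le, (h.snd_pos x ⟨h0, hL⟩).le⟩

theorem signCoupled_linearization (hK : K.Admissible) (h : K.IsPosSolution L w w')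
    {z z' : ℝ → ℝ × ℝ}
    (hz : TwiceDiffOn 0 L z z' (fun x => -fderiv ℝ (K.reaction x) (w x) (z x))) :
    ∃ M, SignCoupled 0 L M (fun x => (w x).1) (fun x => (w' x).1)
      (fun x => -((w x).1 * K.growth x (w x)))
      (fun x => (z x).1) (fun x => (z' x).1) (fun x => -(fderiv ℝ (K.reaction x) (w x) (z x)).1)
      (fun x => (z x).2) (fun x => (z' x).2)
      (fun x => -(fderiv ℝ (K.reaction x) (w x) (z x)).2) := by
  obtain ⟨M, hM⟩ := (isCompact_Icc (a := 0) (b := L)).exists_bound_of_continuousOn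
    (K.continuous_fderiv_reaction.comp_continuousOn
      (continuousOn_id.prodMk h.twiceDiffOn.continuousOn))
  have hsplit : ∀ x, fderiv ℝ (K.growth x) (w x) (z x) =
      (z x).1 * fderiv ℝ (K.growth x) (w x) (1, 0) +
        (z x).2 * fderiv ℝ (K.growth x) (w x) (0, 1) := fun x => by
    rw [← smul_eq_mul, ← smul_eq_mul, ← map_smul, ← map_smul, ← map_add]
    simp
  have hnorm : ∀ x ∈ Ioo 0 L, ‖-fderiv ℝ (K.reaction x) (w x) (z x)‖ ≤ M * ‖z x‖ :=
    fun x hx => (norm_neg _).trans_le <|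
      (fderiv ℝ (K.reaction x) (w x)).le_of_opNorm_le (hM x (Ioo_subset_Icc_self hx)) (z x)
  refine ⟨M, h.twiceDiffOn_fst, hz.clm_comp (.fst ℝ ℝ ℝ), hz.clm_comp (.snd ℝ ℝ ℝ),
    fun x hx => (h.nonneg x hx).1, fun x hx hne hle => ?_, fun x hx h0 hne => ?_,
    fun x hx hne hle => ?_, hnorm⟩
  all_goals
    have hwx := h.nonneg x (Ioo_subset_Icc_self hx)
    have hu := h.fst_pos x hx
    have hgu := hK.fderiv_growth_fst_neg x _ hwx
    have hgv := hK.fderiv_growth_snd_neg x _ hwx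
    simp only [fderiv_reaction_apply, hsplit]
  · have hφ := mul_pos_of_neg_of_neg hgu (neg_lt_zero.2 (sq_pos_of_ne_zero hne))
    have hψ := mul_nonpos_of_nonneg_of_nonpos hle hgv.le
    linarith [mul_pos (sq_pos_of_pos hu) (add_pos_of_pos_of_nonneg hφ (neg_nonneg.2 hψ))]
  · rw [h0]
    linarith [mul_pos (sq_pos_of_ne_zero hne) (mul_pos hu (neg_pos.2 hgv))]
  · linarith [mul_pos hK.decay_pos (sq_pos_of_ne_zero hne),
      mul_nonpos_of_nonneg_of_nonpos (hK.deriv_source_pos _ hwx.1).le hle]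

theorem eq_zero_of_linearization (hK : K.Admissible) (h : K.IsPosSolution L w w')
    {z z' : ℝ → ℝ × ℝ}
    (hz : TwiceDiffOn 0 L z z' (fun x => -fderiv ℝ (K.reaction x) (w x) (z x)))
    (h0 : z 0 = 0) (hL : z L = 0) : ∀ x ∈ Icc 0 L, z x = 0 := by
  obtain ⟨M, hM⟩ := h.signCoupled_linearization hK hz
  have := hM.eq_zero (by simp [h0]) (by simp [hL]) (by simp [h0]) (by simp [hL])
  exact fun x hx => Prod.ext (this x hx).1 (this x hx).2

theorem signCoupled_sub (hK : K.Admissible) (h : K.IsPosSolution L w w') {z z' : ℝ → ℝ × ℝ}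
    (hz : K.IsPosSolution L z z') :
    ∃ M, SignCoupled 0 L M (fun x => (w x).1) (fun x => (w' x).1)
      (fun x => -((w x).1 * K.growth x (w x)))
      (fun x => (z x).1 - (w x).1) (fun x => (z' x).1 - (w' x).1)
      (fun x => -((z x).1 * K.growth x (z x)) - -((w x).1 * K.growth x (w x)))
      (fun x => (z x).2 - (w x).2) (fun x => (z' x).2 - (w' x).2)
      (fun x => -(K.source (z x).1 - K.decay * (z x).2) -
        -(K.source (w x).1 - K.decay * (w x).2)) := by
  obtain ⟨R, hR⟩ := isCompact_Icc.exists_bound_of_continuousOn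
    (h.twiceDiffOn.continuousOn.prodMk hz.twiceDiffOn.continuousOn)
  obtain ⟨M, hM⟩ := K.exists_norm_reaction_sub_le 0 L R
  have hnorm : ∀ x ∈ Ioo 0 L, ‖-K.reaction x (z x) - -K.reaction x (w x)‖ ≤ M * ‖z x - w x‖ :=
    fun x hx => by
      have hRx := hR x (Ioo_subset_Icc_self hx)
      rw [neg_sub_neg, norm_sub_rev]
      exact hM x (Ioo_subset_Icc_self hx) _
        (mem_closedBall_zero_iff.2 ((norm_fst_le (w x, z x)).trans hRx)) _
        (mem_closedBall_zero_iff.2 ((norm_snd_le (w x, z x)).trans hRx))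
  refine ⟨M, h.twiceDiffOn_fst, hz.twiceDiffOn_fst.sub h.twiceDiffOn_fst,
    hz.twiceDiffOn_snd.sub h.twiceDiffOn_snd, fun x hx => (h.nonneg x hx).1,
    fun x hx hne hle => ?_, fun x hx h0 hne => ?_, fun x hx hne hle => ?_, hnorm⟩
  all_goals
    have hwx := h.nonneg x (Ioo_subset_Icc_self hx)
    have hzx := hz.nonneg x (Ioo_subset_Icc_self hx)
    have huw := h.fst_pos x hx
    have huz := hz.fst_pos x hx
  · linarith [mul_pos (mul_pos huw huz) (hK.mul_growth_sub_growth_pos x hwx hzx hne hle)]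
  · have heq := sub_eq_zero.1 h0
    rw [heq]
    linarith [mul_pos huw (hK.sub_mul_growth_sub_growth_pos x hwx hzx heq hne)]
  · linarith [mul_pos hK.decay_pos (sq_pos_of_ne_zero hne),
      hK.mul_source_sub_source_nonpos hwx.1 hzx.1 hle]

theorem eqOn (hK : K.Admissible) (h : K.IsPosSolution L w w') {z z' : ℝ → ℝ × ℝ}
    (hz : K.IsPosSolution L z z') : EqOn z w (Icc 0 L) := by
  obtain ⟨M, hM⟩ := h.signCoupled_sub hK hz
  have := hM.eq_zero (by simp [h.left, hz.left]) (by simp [h.right, hz.right])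
    (by simp [h.left, hz.left]) (by simp [h.right, hz.right])
  exact fun x hx => Prod.ext (sub_eq_zero.1 (this x hx).1) (sub_eq_zero.1 (this x hx).2)

end IsPosSolution

variable {K₀ K₁ : Kinetics} {s : ℝ}

section Mix

/-- The affine homotopy between two systems. -/
def mix (K₀ K₁ : Kinetics) (s : ℝ) : Kinetics where
  growth x w := (1 - s) * K₀.growth x w + s * K₁.growth x w
  source p := (1 - s) * K₀.source p + s * K₁.source p
  decay := (1 - s) * K₀.decay + s * K₁.decay
  contDiff_growth :=
    (contDiff_const.mul K₀.contDiff_growth).add (contDiff_const.mul K₁.contDiff_growth)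
  contDiff_source :=
    (contDiff_const.mul K₀.contDiff_source).add (contDiff_const.mul K₁.contDiff_source)

@[simp]
theorem mix_zero (K₀ K₁ : Kinetics) : mix K₀ K₁ 0 = K₀ := by simp [mix]

@[simp]
theorem mix_one (K₀ K₁ : Kinetics) : mix K₀ K₁ 1 = K₁ := by simp [mix]

theorem reaction_mix (K₀ K₁ : Kinetics) (s x : ℝ) (w : ℝ × ℝ) :
    (mix K₀ K₁ s).reaction x w = (1 - s) • K₀.reaction x w + s • K₁.reaction x w := by
  ext <;> simp [reaction, mix] <;> ring

theorem fderiv_reaction_mix (K₀ K₁ : Kinetics) (s x : ℝ) (w : ℝ × ℝ) :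
    fderiv ℝ ((mix K₀ K₁ s).reaction x) w =
      (1 - s) • fderiv ℝ (K₀.reaction x) w + s • fderiv ℝ (K₁.reaction x) w := by
  rw [funext (reaction_mix K₀ K₁ s x)]
  exact (((K₀.differentiable_reaction x w).hasFDerivAt.const_smul (1 - s)).add
    ((K₁.differentiable_reaction x w).hasFDerivAt.const_smul s)).fderiv

theorem fderiv_growth_mix (K₀ K₁ : Kinetics) (s x : ℝ) (w : ℝ × ℝ) :
    fderiv ℝ ((mix K₀ K₁ s).growth x) w =
      (1 - s) • fderiv ℝ (K₀.growth x) w + s • fderiv ℝ (K₁.growth x) w :=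
  ((((K₀.contDiff_growth_right x).differentiable one_ne_zero w).hasFDerivAt.const_mul _).add
    (((K₁.contDiff_growth_right x).differentiable one_ne_zero w).hasFDerivAt.const_mul _)).fderiv

theorem deriv_source_mix (K₀ K₁ : Kinetics) (s p : ℝ) :
    deriv (mix K₀ K₁ s).source p = (1 - s) * deriv K₀.source p + s * deriv K₁.source p :=
  (((K₀.contDiff_source.differentiable one_ne_zero p).hasDerivAt.const_mul _).add
    ((K₁.contDiff_source.differentiable one_ne_zero p).hasDerivAt.const_mul _)).deriv

theorem Admissible.mix (h₀ : K₀.Admissible) (h₁ : K₁.Admissible) (hs : s ∈ Icc (0 : ℝ) 1) :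
    (mix K₀ K₁ s).Admissible where
  fderiv_growth_fst_neg x w hw := by
    rw [fderiv_growth_mix]
    exact convex_Iio (𝕜 := ℝ) (0 : ℝ) (h₀.fderiv_growth_fst_neg x w hw)
      (h₁.fderiv_growth_fst_neg x w hw)
      (sub_nonneg.2 hs.2) hs.1 (sub_add_cancel 1 s)
  fderiv_growth_snd_neg x w hw := by
    rw [fderiv_growth_mix]
    exact convex_Iio (𝕜 := ℝ) (0 : ℝ) (h₀.fderiv_growth_snd_neg x w hw)
      (h₁.fderiv_growth_snd_neg x w hw)
      (sub_nonneg.2 hs.2) hs.1 (sub_add_cancel 1 s)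
  source_zero := by simp [Kinetics.mix, h₀.source_zero, h₁.source_zero]
  deriv_source_pos p hp := by
    rw [deriv_source_mix]
    exact convex_Ioi (𝕜 := ℝ) (0 : ℝ) (h₀.deriv_source_pos p hp) (h₁.deriv_source_pos p hp)
      (sub_nonneg.2 hs.2) hs.1 (sub_add_cancel 1 s)
  decay_pos := convex_Ioi (𝕜 := ℝ) (0 : ℝ) h₀.decay_pos h₁.decay_pos (sub_nonneg.2 hs.2) hs.1
    (sub_add_cancel 1 s)

/-- The constant pair `B` bounds the nonnegative solutions: the growth is negative above `B.1`, and
the decay beats the source above `B.2`. -/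
structure IsBarrier (K : Kinetics) (B : ℝ × ℝ) : Prop where
  nonneg : 0 ≤ B
  growth_nonpos : ∀ x, K.growth x (B.1, 0) ≤ 0
  source_le : K.source B.1 ≤ K.decay * B.2

theorem IsBarrier.mix {B : ℝ × ℝ} (h₀ : K₀.IsBarrier B) (h₁ : K₁.IsBarrier B)
    (hs : s ∈ Icc (0 : ℝ) 1) : (mix K₀ K₁ s).IsBarrier B where
  nonneg := h₀.nonneg
  growth_nonpos x := convex_Iic (𝕜 := ℝ) (0 : ℝ) (h₀.growth_nonpos x) (h₁.growth_nonpos x)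
    (sub_nonneg.2 hs.2) hs.1 (sub_add_cancel 1 s)
  source_le := by
    simp only [Kinetics.mix]
    linarith [mul_le_mul_of_nonneg_left h₀.source_le (sub_nonneg.2 hs.2),
      mul_le_mul_of_nonneg_left h₁.source_le hs.1]

theorem Admissible.exists_isBarrier (h₀ : K₀.Admissible) (h₁ : K₁.Admissible) {P₀ P₁ : ℝ}
    (hP₀ : 0 ≤ P₀) (hP₁ : 0 ≤ P₁) (hg₀ : ∀ x, K₀.growth x (P₀, 0) ≤ 0)
    (hg₁ : ∀ x, K₁.growth x (P₁, 0) ≤ 0) : ∃ B, K₀.IsBarrier B ∧ K₁.IsBarrier B := by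
  set P := max P₀ P₁
  set N := max (K₀.source P / K₀.decay) (K₁.source P / K₁.decay)
  have hP : 0 ≤ P := hP₀.trans (le_max_left _ _)
  have hN : 0 ≤ N :=
    (div_nonneg (h₀.source_nonneg hP) h₀.decay_pos.le).trans (le_max_left _ _)
  exact ⟨(P, N),
    ⟨⟨hP, hN⟩, fun x => (h₀.growth_le x (w := (P₀, 0)) (z := (P, 0)) ⟨hP₀, le_rfl⟩
      ⟨le_max_left _ _, le_rfl⟩).trans (hg₀ x),
      (div_le_iff₀' h₀.decay_pos).1 (le_max_left _ _)⟩,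
    ⟨⟨hP, hN⟩, fun x => (h₁.growth_le x (w := (P₁, 0)) (z := (P, 0)) ⟨hP₁, le_rfl⟩
      ⟨le_max_right _ _, le_rfl⟩).trans (hg₁ x),
      (div_le_iff₀' h₁.decay_pos).1 (le_max_right _ _)⟩⟩

end Mix

namespace IsSolution

variable {w w' : ℝ → ℝ × ℝ}

theorem snd_nonneg (hK : K.Admissible) (h : K.IsSolution L w w')
    (hu : ∀ x ∈ Icc 0 L, 0 ≤ (w x).1) : ∀ x ∈ Icc 0 L, 0 ≤ (w x).2 :=
  h.twiceDiffOn_snd.nonneg_of_deriv₂ (by simp [h.left]) (by simp [h.right]) fun x hx hneg => by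
    linarith [hK.source_nonneg (hu x (Ioo_subset_Icc_self hx)),
      mul_neg_of_pos_of_neg hK.decay_pos hneg]

theorem snd_eq_zero (hK : K.Admissible) (h : K.IsSolution L w w')
    (hu : ∀ x ∈ Icc 0 L, (w x).1 = 0) : ∀ x ∈ Icc 0 L, (w x).2 = 0 := fun x hx =>
  le_antisymm (h.twiceDiffOn_snd.le_of_deriv₂ (by simp [h.left]) (by simp [h.right])
    (fun y hy hpos => by
      rw [hu y (Ioo_subset_Icc_self hy), hK.source_zero]
      linarith [mul_pos hK.decay_pos hpos]) x hx)
    (h.snd_nonneg hK (fun y hy => (hu y hy).ge) x hx)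

theorem isPosSolution (hK : K.Admissible) (h : K.IsSolution L w w')
    (hu : ∀ x ∈ Icc 0 L, 0 ≤ (w x).1) (hne : ∃ x ∈ Icc 0 L, w x ≠ 0) : K.IsPosSolution L w w' := by
  have hgrowth : ContinuousOn (fun x => K.growth x (w x)) (Icc 0 L) :=
    K.contDiff_growth.continuous.comp_continuousOn
      (continuousOn_id.prodMk h.twiceDiffOn.continuousOn)
  obtain ⟨M, hM⟩ := isCompact_Icc.exists_bound_of_continuousOn hgrowth
  have hne₁ : ∃ x ∈ Icc 0 L, (w x).1 ≠ 0 := by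
    by_contra! hzero
    obtain ⟨x, hx, hne⟩ := hne
    exact hne (Prod.ext (hzero x hx) (h.snd_eq_zero hK hzero x hx))
  have hpos : ∀ x ∈ Ioo 0 L, 0 < (w x).1 :=
    h.twiceDiffOn_fst.pos_of_nonneg (M := M) (fun x hx => by
      rw [norm_neg, norm_mul, mul_comm]
      gcongr
      exact hM x (Ioo_subset_Icc_self hx)) hu hne₁
  refine ⟨h, hpos, h.twiceDiffOn_snd.pos_of_deriv₂ (by simp [h.left]) (by simp [h.right])
    fun x hx hle => ?_⟩
  linarith [hK.source_pos (hpos x hx), mul_nonpos_of_nonneg_of_nonpos hK.decay_pos.le hle]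

end IsSolution

namespace IsPosSolution

variable {w w' : ℝ → ℝ × ℝ}

theorem le_barrier (hK : K.Admissible) {B : ℝ × ℝ} (hB : K.IsBarrier B)
    (h : K.IsPosSolution L w w') : ∀ x ∈ Icc 0 L, w x ≤ B := by
  have hu : ∀ x ∈ Icc 0 L, (w x).1 ≤ B.1 :=
    h.twiceDiffOn_fst.le_of_deriv₂ (by simpa [h.left] using hB.nonneg.1)
      (by simpa [h.right] using hB.nonneg.1) fun x hx hlt => by
        have hneg := (hK.growth_lt x (w := (B.1, 0)) (z := w x) ⟨hB.nonneg.1, le_rfl⟩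
          (Prod.lt_iff.2 (.inl ⟨hlt, (h.snd_pos x hx).le⟩))).trans_le (hB.growth_nonpos x)
        exact neg_pos.2 (mul_neg_of_pos_of_neg (h.fst_pos x hx) hneg)
  have hv : ∀ x ∈ Icc 0 L, (w x).2 ≤ B.2 :=
    h.twiceDiffOn_snd.le_of_deriv₂ (by simpa [h.left] using hB.nonneg.2)
      (by simpa [h.right] using hB.nonneg.2) fun x hx hlt => by
        have hsource := hK.strictMonoOn_source.monotoneOn (h.fst_pos x hx).le hB.nonneg.1
          (hu x (Ioo_subset_Icc_self hx))
        linarith [hB.source_le, mul_lt_mul_of_pos_left hlt hK.decay_pos]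
  exact fun x hx => ⟨hu x hx, hv x hx⟩

theorem exists_pi_div_sq_le (h : K.IsPosSolution L w w') (hL : 0 < L) :
    ∃ x ∈ Ioo 0 L, (π / L) ^ 2 ≤ K.growth x (w x) := by
  simpa using h.twiceDiffOn_fst.exists_pi_div_sq_le hL (by simp [h.left]) (by simp [h.right])
    h.fst_pos

theorem exists_le_pi_div_sq (h : K.IsPosSolution L w w') (hL : 0 < L) :
    ∃ x ∈ Ioo 0 L, K.growth x (w x) ≤ (π / L) ^ 2 := by
  simpa using h.twiceDiffOn_fst.exists_le_pi_div_sq hL (by simp [h.left]) (by simp [h.right])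
    h.fst_pos

end IsPosSolution

end Kinetics

theorem TwiceDiffOn.nonneg_of_lt_pi_div_sq {a b ρ : ℝ} {φ φ' A : ℝ → ℝ}
    (h : TwiceDiffOn a b φ φ' (fun x => -(φ x * A x))) (ha : φ a = 0) (hb : φ b = 0)
    (hρ : 0 < ρ) (hab : 2 * ρ ≤ b - a) (hpos : ∀ x ∈ Icc (a + ρ) (b - ρ), 0 < φ x)
    (hA : ∀ x ∈ Ioo a b, A x < (π / ρ) ^ 2) : ∀ x ∈ Icc a b, 0 ≤ φ x := by
  by_contra! hneg
  obtain ⟨x, hx, hφx⟩ := hneg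
  obtain ⟨c, d, hac, hcd, hdb, hc, hd, -, hneg⟩ := exists_Ioo_pos h.neg.continuousOn
    (by simp [ha]) (by simp [hb]) hx (neg_pos.2 hφx)
  have hout : ∀ y ∈ Icc (a + ρ) (b - ρ), y ∉ Ioo c d := fun y hy hycd =>
    (hpos y hy).not_gt (neg_pos.1 (hneg y hycd))
  have hlength : d - c ≤ ρ := by
    by_contra! hlong
    rcases le_or_gt d (a + ρ) with hd | hd
    · linarith
    · exact hout (max c (a + ρ) / 2 + min d (b - ρ) / 2) (by grind) (by grind)
  obtain ⟨y, hy, hle⟩ := (h.neg.mono hac hdb).congr_deriv₂ (χ := fun x => -(-φ x * A x))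
    (fun x _ => by ring) |>.exists_pi_div_sq_le hcd hc hd hneg
  have hmono : (π / ρ) ^ 2 ≤ (π / (d - c)) ^ 2 := by
    have := sub_pos.2 hcd
    gcongr
  linarith [hA y (Ioo_subset_Ioo hac hdb hy)]

theorem exists_lt_pi_div_sq (C : ℝ) {r : ℝ} (hr : 0 < r) : ∃ ρ ∈ Ioo 0 r, C < (π / ρ) ^ 2 := by
  have htop : Tendsto (fun ρ : ℝ => (π * ρ⁻¹) ^ 2) (𝓝[>] 0) atTop :=
    (tendsto_pow_atTop two_ne_zero).comp (tendsto_inv_nhdsGT_zero.const_mul_atTop pi_pos)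
  exact (((htop.eventually_gt_atTop C).and (Ioo_mem_nhdsGT hr)).exists).imp fun ρ h => ⟨h.2, h.1⟩

namespace Kinetics

variable {K K₀ K₁ : Kinetics} {L s : ℝ}

section Dirichlet

/-- The reaction term as a nonlinearity over the interval `[0, L]`. -/
def reactionMap (K : Kinetics) (L : ℝ) : C(Icc 0 L × (ℝ × ℝ), ℝ × ℝ) :=
  ⟨fun p => K.reaction p.1 p.2,
    K.contDiff_reaction.continuous.comp (by fun_prop : Continuous fun p : Icc 0 L × (ℝ × ℝ) =>
      ((p.1 : ℝ), p.2))⟩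

/-- The derivative of `reactionMap` in the densities. -/
noncomputable def fderivReactionMap (K : Kinetics) (L : ℝ) :
    C(Icc 0 L × (ℝ × ℝ), (ℝ × ℝ) →L[ℝ] ℝ × ℝ) :=
  ⟨fun p => fderiv ℝ (K.reaction p.1) p.2,
    K.continuous_fderiv_reaction.comp (by fun_prop : Continuous fun p : Icc 0 L × (ℝ × ℝ) =>
      ((p.1 : ℝ), p.2))⟩

theorem hasStrictFDerivAt_superposition_reactionMap (K : Kinetics) (y : C(Icc 0 L, ℝ × ℝ)) :
    HasStrictFDerivAt (superposition (K.reactionMap L))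
      (pointwiseCLM (superposition (K.fderivReactionMap L) y)) y :=
  hasStrictFDerivAt_superposition (n := K.reactionMap L) (n' := K.fderivReactionMap L)
    (fun x w => (K.differentiable_reaction x w).hasFDerivAt) y

theorem exists_isSolution_of_fixedPoint (hL : 0 < L) {y : C(Icc 0 L, ℝ × ℝ)}
    (hy : greenCLM (ℝ × ℝ) hL.le (superposition (K.reactionMap L) y) = y) :
    ∃ w w', ContDiff ℝ 2 w ∧ K.IsSolution L w w' ∧ ∀ x : Icc 0 L, y x = w x := by
  obtain ⟨w, w', hw, hdiff, h0, h1, heq⟩ :=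
    exists_contDiff_eq_greenCLM hL (superposition (K.reactionMap L) y)
  rw [hy] at heq
  refine ⟨w, w', hw, ⟨hdiff.congr_deriv₂ fun x hx => ?_, h0, h1⟩, heq⟩
  beta_reduce
  rw [IccExtend_of_mem hL.le _ (Ioo_subset_Icc_self hx), superposition_apply, heq]
  rfl

theorem IsSolution.exists_fixedPoint {w w' : ℝ → ℝ × ℝ} (h : K.IsSolution L w w') (hL : 0 < L) :
    ∃ y : C(Icc 0 L, ℝ × ℝ), greenCLM (ℝ × ℝ) hL.le (superposition (K.reactionMap L) y) = y ∧
      ∀ x : Icc 0 L, y x = w x :=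
  ⟨⟨_, h.twiceDiffOn.continuousOn.domRestrict⟩, ContinuousMap.ext fun x =>
    h.twiceDiffOn.greenCLM_eq hL h.left h.right (fun _ => rfl) x, fun _ => rfl⟩

theorem IsPosSolution.eq_zero_of_fixedPoint_linearization (hK : K.Admissible) (hL : 0 < L)
    {w w' : ℝ → ℝ × ℝ} (h : K.IsPosSolution L w w') {g k : C(Icc 0 L, ℝ × ℝ)}
    (hg : ∀ x : Icc 0 L, g x = fderiv ℝ (K.reaction x) (w x) (k x))
    (hk : greenCLM (ℝ × ℝ) hL.le g = k) : k = 0 := by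
  obtain ⟨z, z', -, hz, h0, h1, heq⟩ := exists_contDiff_eq_greenCLM hL g
  rw [hk] at heq
  refine ContinuousMap.ext fun x => (heq x).trans (h.eq_zero_of_linearization hK
    (hz.congr_deriv₂ fun x hx => ?_) h0 h1 x x.2)
  beta_reduce
  rw [IccExtend_of_mem hL.le _ (Ioo_subset_Icc_self hx), hg, heq]

/-- Existence of a positive solution that is twice continuously differentiable on the line. -/
def HasPosSolution (K : Kinetics) (L : ℝ) : Prop :=
  ∃ w w', ContDiff ℝ 2 w ∧ K.IsPosSolution L w w'

end Dirichlet

section Homotopy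

/-- The map whose fixed points at parameter `s` are the solutions of `mix K₀ K₁ s`. -/
noncomputable def homotopyMap (K₀ K₁ : Kinetics) (hL : 0 ≤ L) (p : ℝ × C(Icc 0 L, ℝ × ℝ)) :
    C(Icc 0 L, ℝ × ℝ) :=
  greenCLM (ℝ × ℝ) hL (superposition ((mix K₀ K₁ p.1).reactionMap L) p.2)

theorem exists_hasStrictFDerivAt_homotopyMap (K₀ K₁ : Kinetics) (hL : 0 ≤ L) (s : ℝ)
    (y : C(Icc 0 L, ℝ × ℝ)) :
    ∃ X : ℝ × C(Icc 0 L, ℝ × ℝ) →L[ℝ] C(Icc 0 L, ℝ × ℝ),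
      HasStrictFDerivAt (homotopyMap K₀ K₁ hL) (greenCLM (ℝ × ℝ) hL ∘L X) (s, y) ∧
      ∀ k x, X (0, k) x = fderiv ℝ ((mix K₀ K₁ s).reaction x) (y x) (k x) := by
  have hN : ∀ K : Kinetics, HasStrictFDerivAt
      (fun p : ℝ × C(Icc 0 L, ℝ × ℝ) => superposition (K.reactionMap L) p.2)
      (pointwiseCLM (superposition (K.fderivReactionMap L) y) ∘L .snd ℝ ℝ _) (s, y) := fun K =>
    (K.hasStrictFDerivAt_superposition_reactionMap y).comp (s, y) hasStrictFDerivAt_snd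
  have hmix := (((hasStrictFDerivAt_fst (𝕜 := ℝ) (p := (s, y))).const_sub 1).smul (hN K₀)).add
    ((hasStrictFDerivAt_fst (𝕜 := ℝ) (p := (s, y))).smul (hN K₁))
  refine ⟨_, (greenCLM (ℝ × ℝ) hL).hasStrictFDerivAt.comp (s, y)
    (hmix.congr_of_eventuallyEq (.of_forall fun p => ContinuousMap.ext fun x =>
      (reaction_mix K₀ K₁ p.1 x (p.2 x)).symm)), fun k x => ?_⟩
  rw [fderiv_reaction_mix]
  simp [fderivReactionMap]

theorem continuous_homotopyMap (K₀ K₁ : Kinetics) (hL : 0 ≤ L) :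
    Continuous (homotopyMap K₀ K₁ hL) :=
  continuous_iff_continuousAt.2 fun p =>
    (exists_hasStrictFDerivAt_homotopyMap K₀ K₁ hL p.1 p.2).choose_spec.1.continuousAt

theorem eventually_exists_fixedPoint_homotopyMap (hL : 0 < L) (hK : (mix K₀ K₁ s).Admissible)
    {w w' : ℝ → ℝ × ℝ} (h : (mix K₀ K₁ s).IsPosSolution L w w') {y : C(Icc 0 L, ℝ × ℝ)}
    (hy : homotopyMap K₀ K₁ hL.le (s, y) = y) (hyw : ∀ x : Icc 0 L, y x = w x)
    {U : Set C(Icc 0 L, ℝ × ℝ)} (hU : U ∈ 𝓝 y) :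
    ∀ᶠ t in 𝓝 s, ∃ z ∈ U, homotopyMap K₀ K₁ hL.le (t, z) = z := by
  obtain ⟨X, hX, hXk⟩ := exists_hasStrictFDerivAt_homotopyMap K₀ K₁ hL.le s y
  have hcompact := (isCompactOperator_greenCLM (W := ℝ × ℝ) hL.le).comp_clm (X ∘L .inr ℝ ℝ _)
  exact eventually_exists_fixedPoint hX hcompact
    (fun k hk => h.eq_zero_of_fixedPoint_linearization hK hL (g := X (0, k))
      (fun x => by rw [hXk, hyw]) hk) hy hU

end Homotopy

section Continuation

/-- The growth rates of two systems as a nonlinearity over the interval `[0, L]`. -/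
def growthMap (K₀ K₁ : Kinetics) (L : ℝ) : C(Icc 0 L × (ℝ × ℝ), ℝ × ℝ) :=
  ⟨fun p => (K₀.growth p.1 p.2, K₁.growth p.1 p.2),
    (K₀.contDiff_growth.continuous.prodMk K₁.contDiff_growth.continuous).comp
      (by fun_prop : Continuous fun p : Icc 0 L × (ℝ × ℝ) => ((p.1 : ℝ), p.2))⟩

theorem growth_mix_le_norm (hs : s ∈ Icc (0 : ℝ) 1) (y : C(Icc 0 L, ℝ × ℝ)) (x : Icc 0 L) :
    (mix K₀ K₁ s).growth x (y x) ≤ ‖superposition (growthMap K₀ K₁ L) y‖ := by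
  have hx := (superposition (growthMap K₀ K₁ L) y).norm_coe_le_norm x
  exact convex_Iic (𝕜 := ℝ) _
    ((le_abs_self _).trans ((norm_fst_le (superposition (growthMap K₀ K₁ L) y x)).trans hx))
    ((le_abs_self _).trans ((norm_snd_le (superposition (growthMap K₀ K₁ L) y x)).trans hx))
    (sub_nonneg.2 hs.2) hs.1 (sub_add_cancel 1 s)

/- Near the endpoints an approximating solution is not controlled by the distance to `y`; there its
first component cannot be negative because an interval of length `ρ` is too short to carry a
Dirichlet solution of `-φ'' = A φ` with `A < (π / ρ) ^ 2`. -/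
theorem eventually_isPosSolution (h₀ : K₀.Admissible) (h₁ : K₁.Admissible) (hL : 0 < L)
    {y : C(Icc 0 L, ℝ × ℝ)} (hy : ∀ x : Icc 0 L, (x : ℝ) ∈ Ioo 0 L → 0 < (y x).1) :
    ∀ᶠ z in 𝓝 y, ∀ t ∈ Icc (0 : ℝ) 1, ∀ w w', (mix K₀ K₁ t).IsSolution L w w' →
      (∀ x : Icc 0 L, z x = w x) → (mix K₀ K₁ t).IsPosSolution L w w' := by
  set G := superposition (growthMap K₀ K₁ L)
  obtain ⟨ρ, ⟨hρ, hρL⟩, hC⟩ := exists_lt_pi_div_sq (‖G y‖ + 1) (half_pos hL)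
  have hcompact : IsCompact (Subtype.val ⁻¹' Icc ρ (L - ρ) : Set (Icc 0 L)) :=
    (isClosed_Icc.preimage continuous_subtype_val).isCompact
  have hpos : ∀ᶠ z : C(Icc 0 L, ℝ × ℝ) in 𝓝 y,
      MapsTo z (Subtype.val ⁻¹' Icc ρ (L - ρ)) {v | 0 < v.1} :=
    (ContinuousMap.isOpen_setOfPred_mapsTo hcompact
      (isOpen_lt continuous_const continuous_fst)).mem_nhds fun x hx =>
        hy x ⟨hρ.trans_le hx.1, hx.2.trans_lt (sub_lt_self L hρ)⟩
  have hgrowth : ∀ᶠ z in 𝓝 y, ‖G z‖ < ‖G y‖ + 1 :=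
    (continuous_superposition _).norm.continuousAt.eventually_lt continuousAt_const
      (lt_add_one _)
  filter_upwards [hpos, hgrowth] with z hzpos hzgrowth t ht w w' hw hzw
  have hwpos : ∀ x ∈ Icc ρ (L - ρ), 0 < (w x).1 := fun x hx => by
    have hxL : x ∈ Icc 0 L := ⟨hρ.le.trans hx.1, hx.2.trans (sub_le_self L hρ.le)⟩
    exact hzw ⟨x, hxL⟩ ▸ hzpos (x := ⟨x, hxL⟩) hx
  have hnonneg : ∀ x ∈ Icc 0 L, 0 ≤ (w x).1 :=
    hw.twiceDiffOn_fst.nonneg_of_lt_pi_div_sq (by simp [hw.left]) (by simp [hw.right]) hρ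
      (by linarith) (by simpa using hwpos) fun x hx => by
        rw [← hzw ⟨x, Ioo_subset_Icc_self hx⟩]
        exact (growth_mix_le_norm ht z ⟨x, _⟩).trans_lt (hzgrowth.trans hC)
  have hmid := hwpos (L / 2) ⟨hρL.le, by linarith⟩
  exact hw.isPosSolution (h₀.mix h₁ ht) hnonneg
    ⟨L / 2, ⟨by linarith, by linarith⟩, fun h => hmid.ne' (by simp [h])⟩

theorem HasPosSolution.eventually_mix (h₀ : K₀.Admissible) (h₁ : K₁.Admissible) (hL : 0 < L)
    (hs : s ∈ Icc (0 : ℝ) 1) (h : (mix K₀ K₁ s).HasPosSolution L) :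
    ∀ᶠ t in 𝓝 s, t ∈ Icc (0 : ℝ) 1 → (mix K₀ K₁ t).HasPosSolution L := by
  obtain ⟨w, w', -, hw⟩ := h
  obtain ⟨y, hy, hyw⟩ := hw.exists_fixedPoint hL
  have hpos : ∀ x : Icc 0 L, (x : ℝ) ∈ Ioo 0 L → 0 < (y x).1 := fun x hx =>
    hyw x ▸ hw.fst_pos x hx
  filter_upwards [eventually_exists_fixedPoint_homotopyMap hL (h₀.mix h₁ hs) hw hy hyw
    (eventually_isPosSolution h₀ h₁ hL hpos)] with t ⟨z, hz, hfix⟩ ht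
  obtain ⟨φ, φ', hφ, hsol, hzφ⟩ := exists_isSolution_of_fixedPoint hL hfix
  exact ⟨φ, φ', hφ, hz t ht φ φ' hsol hzφ⟩

/-- The pairs `(s, y)` with `s ∈ [s₀, 1]` such that `y` takes values between zero and `B`, and the
growth of `mix K₀ K₁ s` at `y` is somewhere at most the principal eigenvalue of the interval. The
last condition keeps `y` away from zero. -/
def boundedPairs (K₀ K₁ : Kinetics) (L s₀ : ℝ) (B : ℝ × ℝ) : Set (ℝ × C(Icc 0 L, ℝ × ℝ)) :=
  {p | p.1 ∈ Icc s₀ 1 ∧ (∀ x : Icc 0 L, p.2 x ∈ Icc 0 B) ∧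
    ∃ x : Icc 0 L, (mix K₀ K₁ p.1).growth x (p.2 x) ≤ (π / L) ^ 2}

theorem isClosed_boundedPairs (K₀ K₁ : Kinetics) (L s₀ : ℝ) (B : ℝ × ℝ) :
    IsClosed (boundedPairs K₀ K₁ L s₀ B) := by
  have hvalues : IsClosed {p : ℝ × C(Icc 0 L, ℝ × ℝ) | ∀ x, p.2 x ∈ Icc 0 B} := by
    simp only [ofPred_forall]
    exact isClosed_iInter fun x => isClosed_Icc.preimage ((continuous_eval_const x).comp
      continuous_snd)
  have hgrowth : Continuous fun q : (ℝ × C(Icc 0 L, ℝ × ℝ)) × Icc 0 L =>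
      (mix K₀ K₁ q.1.1).growth q.2 (q.1.2 q.2) := by
    have hpoint : Continuous fun q : (ℝ × C(Icc 0 L, ℝ × ℝ)) × Icc 0 L =>
      ((q.2 : ℝ), q.1.2 q.2) := by fun_prop
    have hs : Continuous fun q : (ℝ × C(Icc 0 L, ℝ × ℝ)) × Icc 0 L => q.1.1 := by fun_prop
    exact ((continuous_const.sub hs).mul (K₀.contDiff_growth.continuous.comp hpoint)).add
      (hs.mul (K₁.contDiff_growth.continuous.comp hpoint))
  have hexists := isClosedMap_fst_of_compactSpace _
    (isClosed_le hgrowth (continuous_const (y := (π / L) ^ 2)))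
  have hparameter := (isClosed_Icc (a := s₀) (b := 1)).preimage
    (continuous_fst (Y := C(Icc 0 L, ℝ × ℝ)))
  convert hparameter.inter (hvalues.inter hexists) using 1
  ext p
  simp [boundedPairs]

theorem exists_isCompact_mapsTo_homotopyMap (K₀ K₁ : Kinetics) (hL : 0 ≤ L) (s₀ : ℝ)
    (B : ℝ × ℝ) :
    ∃ C, IsCompact C ∧ MapsTo (homotopyMap K₀ K₁ hL) (boundedPairs K₀ K₁ L s₀ B) C := by
  have hcont : Continuous fun q : ℝ × ℝ × ℝ × ℝ => (mix K₀ K₁ q.1).reaction q.2.1 q.2.2 := by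
    simp only [reaction_mix]
    exact ((continuous_const.sub continuous_fst).smul
      (K₀.contDiff_reaction.continuous.comp continuous_snd)).add
      (continuous_fst.smul (K₁.contDiff_reaction.continuous.comp continuous_snd))
  obtain ⟨R, hR⟩ := ((isCompact_Icc (a := s₀) (b := 1)).prod
    ((isCompact_Icc (a := 0) (b := L)).prod (isCompact_Icc (a := 0) (b := B)))
    ).exists_bound_of_continuousOn hcont.continuousOn
  obtain ⟨C, hC, hsub⟩ :=
    (isCompactOperator_greenCLM (W := ℝ × ℝ) hL).image_closedBall_subset_compact R
  refine ⟨C, hC, fun p hp => hsub (mem_image_of_mem _ (mem_closedBall_zero_iff.2 ?_))⟩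
  have : Nonempty (Icc 0 L) := ⟨⟨0, le_rfl, hL⟩⟩
  exact (ContinuousMap.norm_le_of_nonempty _).2 fun x => hR (p.1, x, p.2 x) ⟨hp.1, x.2, hp.2.1 x⟩

theorem hasPosSolution_mix_iff (h₀ : K₀.Admissible) (h₁ : K₁.Admissible) (hL : 0 < L)
    {B : ℝ × ℝ} (hB₀ : K₀.IsBarrier B) (hB₁ : K₁.IsBarrier B)
    (hg₀ : ∀ x ∈ Icc 0 L, (π / L) ^ 2 ≤ K₀.growth x 0)
    (hg₁ : ∀ x ∈ Icc 0 L, (π / L) ^ 2 < K₁.growth x 0) {s₀ : ℝ} (hs₀ : 0 < s₀)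
    (hs : s ∈ Icc s₀ 1) :
    (mix K₀ K₁ s).HasPosSolution L ↔
      ∃ y, (s, y) ∈ boundedPairs K₀ K₁ L s₀ B ∧ homotopyMap K₀ K₁ hL.le (s, y) = y := by
  have hs01 : s ∈ Icc (0 : ℝ) 1 := ⟨hs₀.le.trans hs.1, hs.2⟩
  have hK := h₀.mix h₁ hs01
  constructor
  · rintro ⟨w, w', -, hw⟩
    obtain ⟨y, hy, hyw⟩ := hw.exists_fixedPoint hL
    obtain ⟨x, hx, hle⟩ := hw.exists_le_pi_div_sq hL
    refine ⟨y, ⟨hs, fun x => ?_, ⟨x, Ioo_subset_Icc_self hx⟩, ?_⟩, hy⟩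
    · rw [hyw]
      exact ⟨hw.nonneg x x.2, hw.le_barrier hK (hB₀.mix hB₁ hs01) x x.2⟩
    · simpa only [hyw] using hle
  · rintro ⟨y, ⟨-, hyB, x, hle⟩, hy⟩
    obtain ⟨w, w', hw, hsol, hyw⟩ := exists_isSolution_of_fixedPoint hL hy
    refine ⟨w, w', hw, hsol.isPosSolution hK (fun x hx => hyw ⟨x, hx⟩ ▸ (hyB ⟨x, hx⟩).1.1)
      ⟨x, x.2, fun hzero => hle.not_gt ?_⟩⟩
    rw [hyw, hzero]
    simp only [mix]
    nlinarith [hg₀ x x.2, hg₁ x x.2, mul_lt_mul_of_pos_left (hg₁ x x.2) (hs₀.trans_le hs.1),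
      mul_le_mul_of_nonneg_left (hg₀ x x.2) (sub_nonneg.2 hs.2)]

theorem isClosed_hasPosSolution_mix (h₀ : K₀.Admissible) (h₁ : K₁.Admissible) (hL : 0 < L)
    {B : ℝ × ℝ} (hB₀ : K₀.IsBarrier B) (hB₁ : K₁.IsBarrier B)
    (hg₀ : ∀ x ∈ Icc 0 L, (π / L) ^ 2 ≤ K₀.growth x 0)
    (hg₁ : ∀ x ∈ Icc 0 L, (π / L) ^ 2 < K₁.growth x 0) {s₀ : ℝ} (hs₀ : 0 < s₀) :
    IsClosed ({s | (mix K₀ K₁ s).HasPosSolution L} ∩ Icc s₀ 1) := by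
  obtain ⟨C, hC, hmaps⟩ := exists_isCompact_mapsTo_homotopyMap K₀ K₁ hL.le s₀ B
  convert isClosed_exists_fixedPoint (continuous_homotopyMap K₀ K₁ hL.le) isCompact_Icc hC
    (isClosed_boundedPairs K₀ K₁ L s₀ B) (fun p hp => hp.1) hmaps using 1
  ext s
  exact ⟨fun h => (hasPosSolution_mix_iff h₀ h₁ hL hB₀ hB₁ hg₀ hg₁ hs₀ h.2).1 h.1,
    fun ⟨y, hy, hfix⟩ => ⟨(hasPosSolution_mix_iff h₀ h₁ hL hB₀ hB₁ hg₀ hg₁ hs₀ hy.1).2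
      ⟨y, hy, hfix⟩, hy.1⟩⟩

theorem HasPosSolution.of_mix (h₀ : K₀.Admissible) (h₁ : K₁.Admissible) (hL : 0 < L)
    {B : ℝ × ℝ} (hB₀ : K₀.IsBarrier B) (hB₁ : K₁.IsBarrier B)
    (hg₀ : ∀ x ∈ Icc 0 L, (π / L) ^ 2 ≤ K₀.growth x 0)
    (hg₁ : ∀ x ∈ Icc 0 L, (π / L) ^ 2 < K₁.growth x 0) (h : K₀.HasPosSolution L) :
    K₁.HasPosSolution L := by
  set S : Set ℝ := {s | (mix K₀ K₁ s).HasPosSolution L}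
  have hright : ∀ s ∈ S, s ∈ Ico (0 : ℝ) 1 → ∀ r ∈ Ioi s, (S ∩ Ioc s r).Nonempty := by
    intro s hsS hs r hr
    obtain ⟨t, ht, hst, htr⟩ := (((HasPosSolution.eventually_mix h₀ h₁ hL ⟨hs.1, hs.2.le⟩
      hsS).filter_mono (nhdsWithin_le_nhds (s := Ioi s))).and
        (Ioo_mem_nhdsGT (lt_min hr hs.2))).exists
    exact ⟨t, ht ⟨hs.1.trans hst.le, (htr.trans_le (min_le_right _ _)).le⟩, hst,
      (htr.trans_le (min_le_left _ _)).le⟩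
  obtain ⟨s₀, hs₀S, hs₀, hs₀1⟩ :=
    hright 0 (by simpa [S] using h) ⟨le_rfl, one_pos⟩ 1 (mem_Ioi.2 one_pos)
  have hone : (1 : ℝ) ∈ S :=
    (isClosed_hasPosSolution_mix h₀ h₁ hL hB₀ hB₁ hg₀ hg₁ hs₀).Icc_subset_of_forall_exists_gt hs₀S
      (fun s hs => hright s hs.1 ⟨hs₀.le.trans hs.2.1, hs.2.2⟩) ⟨hs₀1, le_rfl⟩
  simpa [S] using hone

end Continuation

section Existence

/-- The system solved by the pair `(sin (π x / L), sin (π x / L))`, from which the homotopy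
starts. -/
noncomputable def sine (L : ℝ) : Kinetics where
  growth x w := (π / L) ^ 2 + 2 * sin (π / L * x) - w.1 - w.2
  source p := ((π / L) ^ 2 + 1) * p
  decay := 1
  contDiff_growth := by unfold Function.uncurry; fun_prop
  contDiff_source := by fun_prop

theorem admissible_sine (L : ℝ) : (sine L).Admissible := by
  have hgrowth : ∀ x w h, fderiv ℝ ((sine L).growth x) w h = -h.1 - h.2 := fun x w h => by
    have := ((hasFDerivAt_fst (𝕜 := ℝ) (p := w)).const_sub
      ((π / L) ^ 2 + 2 * sin (π / L * x))).sub (hasFDerivAt_snd (𝕜 := ℝ) (p := w))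
    rw [HasFDerivAt.fderiv (f := (sine L).growth x) this]
    simp
  refine ⟨by simp [hgrowth], by simp [hgrowth], by simp [sine],
    fun p _ => ?_, one_pos⟩
  have : deriv (sine L).source p = (π / L) ^ 2 + 1 := by simp [sine]
  rw [this]
  positivity

theorem hasPosSolution_sine (L : ℝ) : (sine L).HasPosSolution L := by
  have hsin : TwiceDiffOn 0 L _ _ _ := .sin_mul (π / L) 0
  have hpos : ∀ x ∈ Ioo 0 L, 0 < sin (π / L * (x - 0)) := fun x hx => by
    simpa using sin_pi_div_pos hx
  refine ⟨_, _, ?_, ⟨(hsin.prodMk hsin).congr_deriv₂ fun x _ => ?_, ?_, ?_⟩, hpos, hpos⟩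
  · fun_prop
  · ext <;> simp [reaction, sine] <;> ring
  · simp
  · rcases eq_or_ne L 0 with rfl | hL <;> simp [*]

theorem Admissible.hasPosSolution (hK : K.Admissible) (hL : 0 < L) {P : ℝ} (hP : 0 ≤ P)
    (hKP : ∀ x, K.growth x (P, 0) ≤ 0) (hK0 : ∀ x ∈ Icc 0 L, (π / L) ^ 2 < K.growth x 0) :
    K.HasPosSolution L := by
  obtain ⟨B, hB₀, hB₁⟩ := (admissible_sine L).exists_isBarrier hK
    (P₀ := (π / L) ^ 2 + 2) (by positivity) hP
    (fun x => by simp only [sine]; linarith [sin_le_one (π / L * x)]) hKP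
  refine .of_mix (admissible_sine L) hK hL hB₀ hB₁ (fun x hx => ?_) hK0 (hasPosSolution_sine L)
  have hsin : 0 ≤ sin (π / L * x) := sin_nonneg_of_nonneg_of_le_pi
    (mul_nonneg (by positivity) hx.1) (by
      rw [div_mul_eq_mul_div, div_le_iff₀ hL]
      exact mul_le_mul_of_nonneg_left hx.2 pi_pos.le)
  simp only [sine, Prod.fst_zero, Prod.snd_zero]
  linarith

end Existence

end Kinetics

section SteadyState

variable {L d τ : ℝ} {f : ℝ → ℝ → ℝ} {H : ℝ → ℝ}

theorem fderiv_uncurry_apply (hf : Differentiable ℝ (Function.uncurry f)) (w h : ℝ × ℝ) :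
    fderiv ℝ (Function.uncurry f) w h =
      deriv (fun s => f s w.2) w.1 * h.1 + deriv (f w.1) w.2 * h.2 := by
  have hfst : HasDerivAt (fun s => f s w.2) (fderiv ℝ (Function.uncurry f) w (1, 0)) w.1 :=
    HasFDerivAt.comp_hasDerivAt (l := Function.uncurry f) w.1 (hf w).hasFDerivAt
      ((hasDerivAt_id' w.1).prodMk (hasDerivAt_const w.1 w.2))
  have hsnd : HasDerivAt (f w.1) (fderiv ℝ (Function.uncurry f) w (0, 1)) w.2 :=
    HasFDerivAt.comp_hasDerivAt (l := Function.uncurry f) w.2 (hf w).hasFDerivAt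
      ((hasDerivAt_const w.2 w.1).prodMk (hasDerivAt_id' w.2))
  have hsplit : h = h.1 • (1, 0) + h.2 • (0, 1) := by ext <;> simp
  rw [hfst.deriv, hsnd.deriv, hsplit, map_add, map_smul, map_smul]
  simp [mul_comm]

/-- The steady-state system (52), divided by the diffusion rate `d`. -/
noncomputable def steadyState (d τ : ℝ) (hf : ContDiff ℝ 1 (Function.uncurry f))
    (hH : ContDiff ℝ 1 H) : Kinetics where
  growth _ w := f w.1 w.2 / d
  source p := H p / (d * τ)
  decay := 1 / (d * τ)
  contDiff_growth := (hf.comp contDiff_snd).div_const d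
  contDiff_source := hH.div_const _

variable (hf : ContDiff ℝ 1 (Function.uncurry f)) (hH : ContDiff ℝ 1 H)

theorem fderiv_growth_steadyState (x : ℝ) (w h : ℝ × ℝ) :
    fderiv ℝ ((steadyState d τ hf hH).growth x) w h =
      (deriv (fun s => f s w.2) w.1 * h.1 + deriv (f w.1) w.2 * h.2) / d := by
  have hdiff := hf.differentiable one_ne_zero
  have hd := (hdiff w).hasFDerivAt.mul_const d⁻¹
  rw [HasFDerivAt.fderiv (f := (steadyState d τ hf hH).growth x) hd,
    ← fderiv_uncurry_apply hdiff]
  simp [div_eq_inv_mul]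

theorem deriv_source_steadyState (p : ℝ) :
    deriv (steadyState d τ hf hH).source p = deriv H p / (d * τ) :=
  deriv_div_const _

theorem admissible_steadyState (hd : 0 < d) (hτ : 0 < τ)
    (hfu : ∀ p ≥ (0 : ℝ), ∀ q ≥ (0 : ℝ), deriv (fun s => f s q) p < 0)
    (hfv : ∀ p ≥ (0 : ℝ), ∀ q ≥ (0 : ℝ), deriv (f p) q < 0) (hH0 : H 0 = 0)
    (hH' : ∀ p ≥ (0 : ℝ), 0 < deriv H p) : (steadyState d τ hf hH).Admissible where
  fderiv_growth_fst_neg x w hw := by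
    simpa [fderiv_growth_steadyState] using div_neg_of_neg_of_pos (hfu _ hw.1 _ hw.2) hd
  fderiv_growth_snd_neg x w hw := by
    simpa [fderiv_growth_steadyState] using div_neg_of_neg_of_pos (hfv _ hw.1 _ hw.2) hd
  source_zero := by simp [steadyState, hH0]
  deriv_source_pos p hp :=
    (deriv_source_steadyState hf hH p).symm ▸ div_pos (hH' p hp) (mul_pos hd hτ)
  decay_pos := one_div_pos.2 (mul_pos hd hτ)

theorem IsPosSol.isPosSolution (hL : 0 < L) (hd : d ≠ 0) {u v : ℝ → ℝ}
    (h : IsPosSol L d τ f H u v) :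
    (steadyState d τ hf hH).IsPosSolution L (fun x => (u x, v x))
      (fun x => (derivWithin u (Icc 0 L) x, derivWithin v (Icc 0 L) x)) := by
  obtain ⟨hu, hv, hupos, hvpos, hueq, hveq, hu0, huL, hv0, hvL⟩ := h
  refine ⟨⟨((TwiceDiffOn.of_contDiffOn hL hu).prodMk (.of_contDiffOn hL hv)).congr_deriv₂
    fun x hx => ?_, by simp [hu0, hv0], by simp [huL, hvL]⟩, hupos, hvpos⟩
  ext
  · simp only [Kinetics.reaction, steadyState, Prod.fst_neg]
    field_simp
    linear_combination -hueq x hx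
  · simp only [Kinetics.reaction, steadyState, Prod.snd_neg]
    field_simp
    linear_combination -hveq x hx

theorem Kinetics.HasPosSolution.exists_isPosSol (hd : d ≠ 0)
    (h : (steadyState d τ hf hH).HasPosSolution L) : ∃ u v, IsPosSol L d τ f H u v := by
  obtain ⟨w, w', hw, hsol⟩ := h
  refine ⟨fun x => (w x).1, fun x => (w x).2, hw.fst.contDiffOn, hw.snd.contDiffOn,
    hsol.fst_pos, hsol.snd_pos, fun x hx => ?_, fun x hx => ?_,
    by simp [hsol.left], by simp [hsol.right], by simp [hsol.left], by simp [hsol.right]⟩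
  · rw [hsol.twiceDiffOn_fst.deriv_deriv hx]
    simp only [steadyState]
    field_simp
  · rw [hsol.twiceDiffOn_snd.deriv_deriv hx]
    simp only [steadyState]
    field_simp

theorem IsPosSol.nonDeg (hL : 0 < L) (hd : d ≠ 0)
    (hK : (steadyState d τ hf hH).Admissible) {u v : ℝ → ℝ} (h : IsPosSol L d τ f H u v) :
    NonDeg L d τ f H u v := by
  intro φ ψ hφ hψ hφeq hψeq hφ0 hφL hψ0 hψL x hx
  have hz : TwiceDiffOn 0 L (fun x => (φ x, ψ x)) _ (fun x =>
      -fderiv ℝ ((steadyState d τ hf hH).reaction x) (u x, v x) (φ x, ψ x)) :=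
    ((TwiceDiffOn.of_contDiffOn hL hφ).prodMk (.of_contDiffOn hL hψ)).congr_deriv₂ fun x hx => by
      rw [Kinetics.fderiv_reaction_apply, fderiv_growth_steadyState, deriv_source_steadyState]
      ext
      · simp only [steadyState, Prod.fst_neg]
        field_simp
        linear_combination -hφeq x hx
      · simp only [steadyState, Prod.snd_neg]
        field_simp
        linear_combination -hψeq x hx
  exact Prod.ext_iff.1 ((h.isPosSolution hf hH hL hd).eq_zero_of_linearization hK hz
    (by simp [hφ0, hψ0]) (by simp [hφL, hψL]) x hx)

theorem IsPosSol.eqOn (hL : 0 < L) (hd : d ≠ 0) (hK : (steadyState d τ hf hH).Admissible)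
    {u v u' v' : ℝ → ℝ} (h : IsPosSol L d τ f H u v) (h' : IsPosSol L d τ f H u' v') :
    EqOn u' u (Icc 0 L) ∧ EqOn v' v (Icc 0 L) := by
  have := (h.isPosSolution hf hH hL hd).eqOn hK (h'.isPosSolution hf hH hL hd)
  exact ⟨fun x hx => congrArg Prod.fst (this hx), fun x hx => congrArg Prod.snd (this hx)⟩

theorem IsPosSol.pi_div_sq_lt (hL : 0 < L) (hd : d ≠ 0)
    (hK : (steadyState d τ hf hH).Admissible) {u v : ℝ → ℝ} (h : IsPosSol L d τ f H u v) :
    (π / L) ^ 2 < f 0 0 / d := by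
  have hw := h.isPosSolution hf hH hL hd
  obtain ⟨x, hx, hle⟩ := hw.exists_pi_div_sq_le hL
  have hpos : (0 : ℝ × ℝ) < (u x, v x) :=
    Prod.lt_iff.2 (.inl ⟨hw.fst_pos x hx, (hw.snd_pos x hx).le⟩)
  exact hle.trans_lt (hK.growth_lt x le_rfl hpos)

theorem exists_isPosSol (hL : 0 < L) (hd : 0 < d)
    (hK : (steadyState d τ hf hH).Admissible) {P : ℝ} (hP : 0 ≤ P) (hfP : f P 0 ≤ 0)
    (hlt : (π / L) ^ 2 < f 0 0 / d) : ∃ u v, IsPosSol L d τ f H u v :=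
  (hK.hasPosSolution hL hP (fun _ => div_nonpos_of_nonpos_of_nonneg hfP hd.le)
    fun _ _ => hlt).exists_isPosSol hf hH hd.ne'

end SteadyState

theorem stmt14_general (L τ : ℝ) (hL : 0 < L) (hτ : 0 < τ) (f : ℝ → ℝ → ℝ) (H : ℝ → ℝ)
    (hf : ContDiff ℝ 1 (Function.uncurry f))
    (hfu : ∀ p ≥ (0 : ℝ), ∀ q ≥ (0 : ℝ), deriv (fun s => f s q) p < 0)
    (hfv : ∀ p ≥ (0 : ℝ), ∀ q ≥ (0 : ℝ), deriv (f p) q < 0) (hf00 : 0 < f 0 0)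
    (hH : ContDiff ℝ 1 H) (hH0 : H 0 = 0) (hH' : ∀ p ≥ (0 : ℝ), 0 < deriv H p)
    (P : ℝ) (hP : 0 ≤ P) (hfP : f P 0 ≤ 0) :
    (∀ d : ℝ, 0 < d → d < f 0 0 * L ^ 2 / π ^ 2 →
      ∃ u v : ℝ → ℝ, IsPosSol L d τ f H u v ∧ NonDeg L d τ f H u v ∧
        ∀ u' v' : ℝ → ℝ, IsPosSol L d τ f H u' v' →
          (EqOn u' u (Icc 0 L) ∧ EqOn v' v (Icc 0 L))) ∧
    (∀ d : ℝ, f 0 0 * L ^ 2 / π ^ 2 ≤ d →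
      ¬ ∃ u v : ℝ → ℝ, IsPosSol L d τ f H u v) := by
  have hK : ∀ d, 0 < d → (steadyState d τ hf hH).Admissible := fun d hd =>
    admissible_steadyState hf hH hd hτ hfu hfv hH0 hH'
  have hthreshold : ∀ d, 0 < d → ((π / L) ^ 2 < f 0 0 / d ↔ d < f 0 0 * L ^ 2 / π ^ 2) :=
    fun d hd => by
      rw [div_pow, div_lt_div_iff₀ (by positivity) hd, lt_div_iff₀ (by positivity), mul_comm d]
  refine ⟨fun d hd hlt => ?_, fun d hle ⟨u, v, h⟩ => ?_⟩
  · obtain ⟨u, v, h⟩ := exists_isPosSol hf hH hL hd (hK d hd) hP hfP ((hthreshold d hd).2 hlt)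
    exact ⟨u, v, h, h.nonDeg hf hH hL hd.ne' (hK d hd),
      fun _ _ => h.eqOn hf hH hL hd.ne' (hK d hd)⟩
  · have hd : 0 < d := (by positivity : 0 < f 0 0 * L ^ 2 / π ^ 2).trans_le hle
    exact hle.not_gt ((hthreshold d hd).1 (h.pi_div_sq_lt hf hH hL hd.ne' (hK d hd)))

/-- uniqueness and exact multiplicity for the 1D steady state system (52).
Under (A7)-type monotonicity, f(0,0) > 0 and condition (A4) for F(u,v) = u·f(u,v),
for each 0 < d < d* = f(0,0)L²/π², (52) has exactly one positive classical solution
(up to equality on [0,L]), which is non-degenerate, and for d ≥ d* it has none. -/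
theorem stmt14 (L τ : ℝ) (hL : 0 < L) (hτ : 0 < τ)
    (f : ℝ → ℝ → ℝ) (H : ℝ → ℝ)
    (hf : ContDiff ℝ 2 (Function.uncurry f))
    (hfu : ∀ p ≥ (0:ℝ), ∀ q ≥ (0:ℝ), deriv (fun s => f s q) p < 0)
    (hfv : ∀ p ≥ (0:ℝ), ∀ q ≥ (0:ℝ), deriv (f p) q < 0)
    (hf00 : 0 < f 0 0)
    (hH : ContDiff ℝ 2 H) (hH0 : H 0 = 0)
    (hH' : ∀ p ≥ (0:ℝ), 0 < deriv H p)
    -- condition (A4) for F(u,v) = u f(u,v)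
    (F₁ : ℝ → ℝ) (K₀ ustar : ℝ) (hK₀ : 0 < K₀) (hustar : 0 < ustar)
    (hF₁c : ContinuousOn F₁ (Ici 0))
    (hFle : ∀ p ≥ (0:ℝ), ∀ q ≥ (0:ℝ), p * f p q ≤ F₁ p * p)
    (hF₁star : F₁ ustar = 0)
    (hF₁pos : ∀ p : ℝ, 0 < p → p < ustar → 0 < F₁ p ∧ F₁ p < K₀)
    (hF₁neg : ∀ p : ℝ, ustar < p → F₁ p < 0) :
    (∀ d : ℝ, 0 < d → d < f 0 0 * L ^ 2 / π ^ 2 →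
      ∃ u v : ℝ → ℝ, IsPosSol L d τ f H u v ∧ NonDeg L d τ f H u v ∧
        ∀ u' v' : ℝ → ℝ, IsPosSol L d τ f H u' v' →
          (EqOn u' u (Icc 0 L) ∧ EqOn v' v (Icc 0 L))) ∧
    (∀ d : ℝ, f 0 0 * L ^ 2 / π ^ 2 ≤ d →
      ¬ ∃ u v : ℝ → ℝ, IsPosSol L d τ f H u v) := by
  have hneg : f (ustar + 1) 0 ≤ 0 :=
    (le_of_mul_le_mul_left ((hFle _ (by positivity) 0 le_rfl).trans_eq (mul_comm _ _))
      (by positivity)).trans (hF₁neg _ (lt_add_one _)).le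
  exact stmt14_general L τ hL hτ f H (hf.of_le one_le_two) hfu hfv hf00 (hH.of_le one_le_two)
    hH0 hH' (ustar + 1) (by positivity) hneg
end
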